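/- arXiv:0801.4069 — 2 statements merged into one kernel-verified Lean document; each statement's English description precedes it below -/
import Mathlib

section
/- For every natural number n there is an integer a(n) such that every finite acyclically indecomposable tournament with at least a(n) vertices contains a subtournament isomorphic to Š for some S ∈ 𝔅_{n̲}, where n̲ is the acyclic tournament ({0,…,n−1},<), 𝔅_{n̲} = {C3[n̲], V[n̲], T[n̲], U[n̲], H[n̲], K[n̲]}, and Š denotes the quotient tournament of S on its set of acyclic components. -/
/-!
Choosing a representative of each acyclic component embeds `Š` into `S` (`check_embeds`), so it
suffices to find some `S ∈ 𝔅_{n̲}` itself inside a large acyclically indecomposable tournament.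

The structural input is `exists_cycle`: for every edge `x → y` there is a 3-cycle `C` such that
`x ∈ C` or `x → C`, and `y ∈ C` or `C → y`; otherwise `x`, `y` and the vertices between them would
form an acyclic autonomous set. By Ramsey's theorem a large tournament contains a long chain
`x 0 → y 0 → x 1 → y 1 → …`. Attach to each edge `x i → y i` a separating 3-cycle
`a i → b i → c i → a i`, and apply Ramsey's theorem again to make the five rows `x, y, a, b, c`
homogeneous.

Two homogeneous rows `p`, `q` with `p i → q i` have, up to reversing the order of the indices, very
few shapes (`pair_lemma`): either they give one of `T`, `U`, `H`, `K`, or all of `p` dominates all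
of `q`, or `p` and `q` are interleaved in a single chain. In the last case a vertex `e` with
`q → e → p` gives a copy of `V`. For the rows `a, b, c`, any interleaved pair yields `V` or `C3`
(`triple_dom`), so one may assume `a → b → c → a` as whole rows. The relation of this 3-cycle of
rows to the chain formed by `x` and `y` then always produces a vertex `e` completing an interleaved
pair to `V` (`good_of_rows`).
-/

universe u v

/-- `r` is a tournament relation on `V`: irreflexive and, for distinct vertices,
exactly one of the two directed edges is present. -/
def IsTournament {V : Type u} (r : V → V → Prop) : Prop :=
  (∀ x, ¬ r x x) ∧ ∀ x y : V, x ≠ y → (r x y ↔ ¬ r y x)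

/-- A subset `A` is autonomous in the tournament `r`. -/
def Autonomous {V : Type u} (r : V → V → Prop) (A : Set V) : Prop :=
  ∀ x ∈ A, ∀ x' ∈ A, ∀ y ∉ A, (r x y ↔ r x' y)

/-- A subset `A` is acyclic: it contains no 3-cycle. -/
def AcyclicSet {V : Type u} (r : V → V → Prop) (A : Set V) : Prop :=
  ¬ ∃ a ∈ A, ∃ b ∈ A, ∃ c ∈ A, r a b ∧ r b c ∧ r c a

/-- The acyclic component of a vertex `x`: the union of all acyclic autonomous
subsets containing `x`. -/
def acyclicComponent {V : Type u} (r : V → V → Prop) (x : V) : Set V :=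
  ⋃₀ {A : Set V | x ∈ A ∧ Autonomous r A ∧ AcyclicSet r A}

/-- `A` is an acyclic component of the tournament `r`. -/
def IsAcyclicComponent {V : Type u} (r : V → V → Prop) (A : Set V) : Prop :=
  ∃ x, A = acyclicComponent r x

/-- A tournament is acyclically indecomposable if every acyclic autonomous subset
has at most one element. -/
def AcyclicallyIndecomposable {V : Type u} (r : V → V → Prop) : Prop :=
  ∀ A : Set V, Autonomous r A → AcyclicSet r A → A.Subsingleton

/-- The type of acyclic components of `r`. -/
def AcComp {V : Type u} (r : V → V → Prop) : Type u :=
  {A : Set V // IsAcyclicComponent r A}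

/-- The quotient tournament `Ť` on the set of acyclic components. -/
def quotRel {V : Type u} (r : V → V → Prop) : AcComp r → AcComp r → Prop :=
  fun A B => A ≠ B ∧ ∃ x ∈ A.val, ∃ y ∈ B.val, r x y

/-- The lexicographical sum of the tournaments `rels i` indexed by the tournament `d`. -/
def lexSumRel {I : Type u} {F : I → Type v} (d : I → I → Prop)
    (rels : ∀ i, F i → F i → Prop) : (Σ i, F i) → (Σ i, F i) → Prop :=
  fun p q => (p.1 ≠ q.1 ∧ d p.1 q.1) ∨
    ∃ h : p.1 = q.1, rels q.1 (cast (congrArg F h) p.2) q.2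

/-- The subtournaments induced on the finite sets `s` and `t` are isomorphic. -/
def InducedIso {V : Type u} (r : V → V → Prop) (s t : Finset V) : Prop :=
  ∃ e : {x // x ∈ s} ≃ {x // x ∈ t},
    ∀ a b : {x // x ∈ s}, r a.val b.val ↔ r (e a).val (e b).val

/-- The profile of a tournament: the number of isomorphism classes of subtournaments
induced on `n`-element subsets of the vertex set. -/
noncomputable def profile {V : Type u} (r : V → V → Prop) (n : ℕ) : ℕ :=
  Nat.card (Quot (fun s t : {w : Finset V // w.card = n} => InducedIso r s.val t.val))

/-- `r` is (isomorphic to) a lexicographical sum of acyclic tournaments indexed by a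
finite tournament. -/
def IsFiniteLexSumOfAcyclic {V : Type u} (r : V → V → Prop) : Prop :=
  ∃ (I : Type) (d : I → I → Prop) (F : I → Type u)
    (rels : ∀ i, F i → F i → Prop),
    Finite I ∧ IsTournament d ∧
    (∀ i, IsTournament (rels i) ∧ AcyclicSet (rels i) Set.univ) ∧
    ∃ e : V ≃ (Σ i, F i), ∀ x y, r x y ↔ lexSumRel d rels (e x) (e y)

/-- A bundled tournament (vertex type together with its edge relation). -/
structure Tour : Type 1 where
  V : Type
  rel : V → V → Prop

/-- `S` is embeddable in the tournament `r`: `S` is isomorphic to a subtournament of `r`. -/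
def Tour.EmbedsIn {W : Type u} (S : Tour) (r : W → W → Prop) : Prop :=
  ∃ f : S.V → W, Function.Injective f ∧ ∀ x y, S.rel x y ↔ r (f x) (f y)

/-- The profile of a bundled tournament. -/
noncomputable def Tour.profile (T : Tour) (n : ℕ) : ℕ := _root_.profile T.rel n

/-- The quotient tournament `Ť` of a bundled tournament, on its acyclic components. -/
def Tour.check (T : Tour) : Tour := ⟨AcComp T.rel, quotRel T.rel⟩

/-- The tournament `C3[C]` for an acyclic tournament `C = (A, lt)`. -/
def c3Rel {A : Type} (lt : A → A → Prop) : A × Fin 3 → A × Fin 3 → Prop :=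
  fun p q => lt p.1 q.1 ∨ (p.1 = q.1 ∧
    ((p.2 = 0 ∧ q.2 = 1) ∨ (p.2 = 1 ∧ q.2 = 2) ∨ (p.2 = 2 ∧ q.2 = 0)))

/-- The tournament `V[C]` for an acyclic tournament `C = (A, lt)`; `none` is the extra vertex. -/
def vRel {A : Type} (lt : A → A → Prop) (p q : Option (A × Fin 2)) : Prop :=
  match p, q with
  | some p, some q => lt p.1 q.1 ∨ (p.1 = q.1 ∧ p.2 = 0 ∧ q.2 = 1)
  | none, some q => q.2 = 0
  | some p, none => p.2 = 1
  | none, none => False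

/-- The tournament `T[C]` for an acyclic tournament `C = (A, lt)`. -/
def tRel {A : Type} (lt : A → A → Prop) : A × Fin 2 → A × Fin 2 → Prop :=
  fun p q =>
    (p.2 = 0 ∧ q.2 = 0 ∧ lt p.1 q.1) ∨
    (p.1 = q.1 ∧ p.2 = 0 ∧ q.2 = 1) ∨
    (p.2 = 1 ∧ q.2 = 1 ∧ lt p.1 q.1) ∨
    (p.2 = 1 ∧ q.2 = 0 ∧ lt q.1 p.1) ∨
    (p.2 = 0 ∧ q.2 = 1 ∧ lt q.1 p.1)

/-- The tournament `U[C]` for an acyclic tournament `C = (A, lt)`. -/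
def uRel {A : Type} (lt : A → A → Prop) : A × Fin 2 → A × Fin 2 → Prop :=
  fun p q =>
    (p.2 = 0 ∧ q.2 = 0 ∧ lt p.1 q.1) ∨
    (p.1 = q.1 ∧ p.2 = 0 ∧ q.2 = 1) ∨
    (p.2 = 1 ∧ q.2 = 1 ∧ lt q.1 p.1) ∨
    (p.2 = 0 ∧ q.2 = 1 ∧ lt p.1 q.1) ∨
    (p.2 = 1 ∧ q.2 = 0 ∧ lt p.1 q.1)

/-- The tournament `H[C]` for an acyclic tournament `C = (A, lt)`. -/
def hRel {A : Type} (lt : A → A → Prop) : A × Fin 2 → A × Fin 2 → Prop :=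
  fun p q =>
    (p.2 = 0 ∧ q.2 = 0 ∧ lt p.1 q.1) ∨
    (p.1 = q.1 ∧ p.2 = 0 ∧ q.2 = 1) ∨
    (p.2 = 1 ∧ q.2 = 1 ∧ lt p.1 q.1) ∨
    (p.2 = 1 ∧ q.2 = 0 ∧ lt q.1 p.1) ∨
    (p.2 = 1 ∧ q.2 = 0 ∧ lt p.1 q.1)

/-- The tournament `K[C]` for an acyclic tournament `C = (A, lt)`. -/
def kRel {A : Type} (lt : A → A → Prop) : A × Fin 2 → A × Fin 2 → Prop :=
  fun p q =>
    (p.2 = 0 ∧ q.2 = 0 ∧ lt p.1 q.1) ∨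
    (p.1 = q.1 ∧ p.2 = 0 ∧ q.2 = 1) ∨
    (p.2 = 1 ∧ q.2 = 1 ∧ lt q.1 p.1) ∨
    (p.2 = 1 ∧ q.2 = 0 ∧ lt q.1 p.1) ∨
    (p.2 = 1 ∧ q.2 = 0 ∧ lt p.1 q.1)

def c3Tour (A : Type) (lt : A → A → Prop) : Tour := ⟨A × Fin 3, c3Rel lt⟩
def vTour (A : Type) (lt : A → A → Prop) : Tour := ⟨Option (A × Fin 2), vRel lt⟩
def tTour (A : Type) (lt : A → A → Prop) : Tour := ⟨A × Fin 2, tRel lt⟩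
def uTour (A : Type) (lt : A → A → Prop) : Tour := ⟨A × Fin 2, uRel lt⟩
def hTour (A : Type) (lt : A → A → Prop) : Tour := ⟨A × Fin 2, hRel lt⟩
def kTour (A : Type) (lt : A → A → Prop) : Tour := ⟨A × Fin 2, kRel lt⟩

/-- The order type `ω`: the natural numbers with the usual strict order. -/
def omegaLT : ℕ → ℕ → Prop := fun m n => m < n

/-- The order type `ω*`: the natural numbers with the reversed strict order. -/
def omegaStarLT : ℕ → ℕ → Prop := fun m n => n < m

/-- The set `𝔅` of twelve tournaments. -/
def frakB : List Tour :=
  [c3Tour ℕ omegaLT, vTour ℕ omegaLT, tTour ℕ omegaLT,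
   uTour ℕ omegaLT, hTour ℕ omegaLT, kTour ℕ omegaLT,
   c3Tour ℕ omegaStarLT, vTour ℕ omegaStarLT, tTour ℕ omegaStarLT,
   uTour ℕ omegaStarLT, hTour ℕ omegaStarLT, kTour ℕ omegaStarLT]

/-- The set `𝔅_{n̲}` of six tournaments built on the acyclic tournament `({0,…,n−1},<)`. -/
def frakBn (n : ℕ) : List Tour :=
  [c3Tour (Fin n) (· < ·), vTour (Fin n) (· < ·), tTour (Fin n) (· < ·),
   uTour (Fin n) (· < ·), hTour (Fin n) (· < ·), kTour (Fin n) (· < ·)]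

namespace FinMorph

/-! ### The quotient embeds into the tournament -/

theorem tour_asymm {V : Type u} {r : V → V → Prop} (h : IsTournament r) {x y : V}
    (hxy : r x y) : ¬ r y x := by
  intro hyx
  by_cases e : x = y
  · subst e; exact h.1 _ hxy
  · exact (h.2 x y e).1 hxy hyx

theorem tour_total {V : Type u} {r : V → V → Prop} (h : IsTournament r) {x y : V}
    (hxy : x ≠ y) : r x y ∨ r y x := by
  have := h.2 x y hxy
  tauto

/-- Two meeting acyclic autonomous sets have an acyclic autonomous union: a 3-cycle cannot
meet an autonomous set in exactly two points. -/
theorem union_aut {V : Type u} {r : V → V → Prop} (h : IsTournament r) {A B : Set V} {z : V}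
    (hzA : z ∈ A) (hzB : z ∈ B) (hA : Autonomous r A) (hB : Autonomous r B)
    (hA' : AcyclicSet r A) (hB' : AcyclicSet r B) :
    Autonomous r (A ∪ B) ∧ AcyclicSet r (A ∪ B) := by
  constructor
  · have key : ∀ x ∈ A ∪ B, ∀ y ∉ A ∪ B, (r x y ↔ r z y) := by
      rintro x (hx | hx) y hy
      · exact hA x hx z hzA y (fun hh => hy (Or.inl hh))
      · exact hB x hx z hzB y (fun hh => hy (Or.inr hh))
    intro x hx x' hx' y hy
    rw [key x hx y hy, key x' hx' y hy]
  · have two : ∀ C : Set V, Autonomous r C → ∀ a b c, r a b → r b c → r c a →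
        a ∈ C → b ∈ C → c ∈ C := by
      intro C hC a b c hab hbc hca ha hb
      by_contra hc
      exact tour_asymm h hca ((hC a ha b hb c hc).2 hbc)
    rintro ⟨a, ha, b, hb, c, hc, hab, hbc, hca⟩
    have a1 := two A hA a b c hab hbc hca
    have a2 := two A hA b c a hbc hca hab
    have a3 := two A hA c a b hca hab hbc
    have b1 := two B hB a b c hab hbc hca
    have b2 := two B hB b c a hbc hca hab
    have b3 := two B hB c a b hca hab hbc
    have nA : ¬ (a ∈ A ∧ b ∈ A ∧ c ∈ A) := fun hh =>
      hA' ⟨a, hh.1, b, hh.2.1, c, hh.2.2, hab, hbc, hca⟩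
    have nB : ¬ (a ∈ B ∧ b ∈ B ∧ c ∈ B) := fun hh =>
      hB' ⟨a, hh.1, b, hh.2.1, c, hh.2.2, hab, hbc, hca⟩
    simp only [Set.mem_union] at ha hb hc
    clear two
    grind

theorem mem_comp_self {V : Type u} {r : V → V → Prop} (h : IsTournament r) (x : V) :
    x ∈ acyclicComponent r x := by
  refine ⟨{x}, ⟨rfl, ?_, ?_⟩, rfl⟩
  · rintro a rfl b rfl y _
    rfl
  · rintro ⟨a, rfl, b, rfl, c, rfl, hab, _, _⟩
    exact h.1 _ hab

/-- Acyclic components partition the vertex set. -/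
theorem comp_eq {V : Type u} {r : V → V → Prop} (h : IsTournament r) {x y : V}
    (hy : y ∈ acyclicComponent r x) : acyclicComponent r y = acyclicComponent r x := by
  obtain ⟨A, ⟨hxA, hA, hA'⟩, hyA⟩ := hy
  ext z
  constructor
  · rintro ⟨B, ⟨hyB, hB, hB'⟩, hzB⟩
    obtain ⟨u1, u2⟩ := union_aut h hyA hyB hA hB hA' hB'
    exact ⟨A ∪ B, ⟨Or.inl hxA, u1, u2⟩, Or.inr hzB⟩
  · rintro ⟨B, ⟨hxB, hB, hB'⟩, hzB⟩
    obtain ⟨u1, u2⟩ := union_aut h hxA hxB hA hB hA' hB'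
    exact ⟨A ∪ B, ⟨Or.inl hyA, u1, u2⟩, Or.inr hzB⟩

/-- Acyclic components are autonomous. -/
theorem comp_aut {V : Type u} {r : V → V → Prop} {x y z : V}
    (hy : y ∈ acyclicComponent r x) (hz : z ∉ acyclicComponent r x) : r x z ↔ r y z := by
  obtain ⟨A, ⟨hxA, hA, hA'⟩, hyA⟩ := hy
  exact hA x hxA y hyA z (fun hh => hz ⟨A, ⟨hxA, hA, hA'⟩, hh⟩)

/-- Choosing one vertex in each acyclic component embeds `Š` into `S`. -/
theorem check_embeds {W : Type} (S : Tour) {r : W → W → Prop} (hr : IsTournament r)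
    (hS : S.EmbedsIn r) : (Tour.check S).EmbedsIn r := by
  obtain ⟨f, hf, hfr⟩ := hS
  have h : IsTournament S.rel := by
    refine ⟨fun x hx => hr.1 _ ((hfr _ _).1 hx), fun x y hxy => ?_⟩
    rw [hfr, hfr]
    exact hr.2 _ _ (fun e => hxy (hf e))
  have hch : ∀ A : AcComp S.rel, ∃ x, A.val = acyclicComponent S.rel x := fun A => A.2
  choose g hg using hch
  have ginj : Function.Injective g := by
    intro A B e
    apply Subtype.ext
    rw [hg A, hg B, e]
  refine ⟨fun A => f (g A), fun A B e => ginj (hf e), fun A B => ?_⟩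
  show quotRel S.rel A B ↔ _
  rw [← hfr]
  constructor
  · rintro ⟨hne, x, hx, y, hy, hxy⟩
    rw [hg A] at hx
    rw [hg B] at hy
    have hdis : ∀ w, w ∈ acyclicComponent S.rel (g A) →
        w ∉ acyclicComponent S.rel (g B) := by
      intro w h1 h2
      apply hne
      apply Subtype.ext
      rw [hg A, hg B, ← comp_eq h h1, ← comp_eq h h2]
    have e1 : S.rel (g A) y := (comp_aut hx (fun hh => hdis y hh hy)).2 hxy
    have hAB : g B ≠ g A := fun e => hne (ginj e.symm)
    by_contra hcon
    have e2 := (tour_total h hAB).resolve_right hcon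
    exact tour_asymm h e1
      ((comp_aut hy (hdis _ (mem_comp_self h _))).1 e2)
  · intro hAB
    refine ⟨?_, g A, ?_, g B, ?_, hAB⟩
    · rintro rfl
      exact h.1 _ hAB
    · rw [hg A]; exact mem_comp_self h _
    · rw [hg B]; exact mem_comp_self h _

/-! ### Finite Ramsey theorem for pairs -/

/-- An increasing sequence along which the colour of a pair depends only on its smaller
element: take the least element, then recurse into a large colour class. -/
theorem ramsey_end (κ : Type) [Finite κ] (m : ℕ) :
    ∃ N : ℕ, ∀ (c : ℕ → ℕ → κ) (s : Finset ℕ), N ≤ s.card →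
      ∃ f : ℕ → ℕ, (∀ i < m, f i ∈ s) ∧ (∀ i j, i < j → j < m → f i < f j) ∧
        ∃ k : ℕ → κ, ∀ i j, i < j → j < m → c (f i) (f j) = k i := by
  classical
  have := Fintype.ofFinite κ
  induction m with
  | zero =>
    refine ⟨1, fun c s _ => ⟨id, by simp, by simp, fun i => c i i, by simp⟩⟩
  | succ m ih =>
    obtain ⟨N, hN⟩ := ih
    refine ⟨Fintype.card κ * N + 2, fun c s hs => ?_⟩
    have hne : s.Nonempty := Finset.card_pos.1 (by omega)
    set a := s.min' hne with ha
    have hcard : (s.erase a).card = s.card - 1 :=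
      Finset.card_erase_of_mem (s.min'_mem hne)
    obtain ⟨k0, -, hk0⟩ := Finset.exists_lt_card_fiber_of_mul_lt_card_of_maps_to
      (s := s.erase a) (t := (Finset.univ : Finset κ)) (f := fun j => c a j) (n := N)
      (fun _ _ => Finset.mem_univ _) (by rw [hcard, Finset.card_univ]; omega)
    obtain ⟨f, h1, h2, k, h3⟩ := hN c _ hk0.le
    have hlt : ∀ i < m, a < f i ∧ f i ∈ s ∧ c a (f i) = k0 := by
      intro i hi
      have := h1 i hi
      rw [Finset.mem_filter, Finset.mem_erase] at this
      exact ⟨lt_of_le_of_ne (s.min'_le _ this.1.2) (Ne.symm this.1.1), this.1.2, this.2⟩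
    refine ⟨fun i => Nat.casesOn i a f, ?_, ?_, fun i => Nat.casesOn i k0 k, ?_⟩
    · rintro (_ | i) hi
      · exact s.min'_mem hne
      · exact (hlt i (by omega)).2.1
    · rintro (_ | i) (_ | j) hij hj
      · omega
      · exact (hlt j (by omega)).1
      · omega
      · exact h2 i j (by omega) (by omega)
    · rintro (_ | i) (_ | j) hij hj
      · omega
      · exact (hlt j (by omega)).2.2
      · omega
      · exact h3 i j (by omega) (by omega)

theorem ramsey (κ : Type) [Finite κ] (m : ℕ) :
    ∃ N : ℕ, ∀ c : ℕ → ℕ → κ, ∃ f : ℕ → ℕ, (∀ i < m, f i < N) ∧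
      (∀ i j, i < j → j < m → f i < f j) ∧
      ∀ i j i' j', i < j → j < m → i' < j' → j' < m → c (f i) (f j) = c (f i') (f j') := by
  classical
  have := Fintype.ofFinite κ
  obtain ⟨N, hN⟩ := ramsey_end κ (Fintype.card κ * m + 1)
  refine ⟨N, fun c => ?_⟩
  obtain ⟨f, h1, h2, k, h3⟩ := hN c (Finset.range N) (by simp)
  obtain ⟨k0, -, hk0⟩ := Finset.exists_lt_card_fiber_of_mul_lt_card_of_maps_to
      (s := Finset.range (Fintype.card κ * m + 1)) (t := (Finset.univ : Finset κ))
      (f := k) (n := m) (fun _ _ => Finset.mem_univ _)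
      (by rw [Finset.card_range, Finset.card_univ]; omega)
  obtain ⟨t, ht, htc⟩ := Finset.exists_subset_card_eq hk0.le
  let e := t.orderEmbOfFin htc
  have he : ∀ i, e i < Fintype.card κ * m + 1 ∧ k (e i) = k0 := by
    intro i
    have := ht (t.orderEmbOfFin_mem htc i)
    rw [Finset.mem_filter, Finset.mem_range] at this
    exact this
  refine ⟨fun i => if h : i < m then f (e ⟨i, h⟩) else 0, ?_, ?_, ?_⟩
  · intro i hi
    simp only [hi, dif_pos]
    exact Finset.mem_range.1 (h1 _ (he _).1)
  · intro i j hij hj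
    have hi : i < m := by omega
    simp only [hi, hj, dif_pos]
    exact h2 _ _ (e.strictMono hij) (he _).1
  · intro i j i' j' hij hj hij' hj'
    have hi : i < m := by omega
    have hi' : i' < m := by omega
    simp only [hi, hj, hi', hj', dif_pos]
    rw [h3 _ _ (e.strictMono (by exact hij)) (he _).1,
      h3 _ _ (e.strictMono (by exact hij')) (he _).1, (he _).2, (he _).2]

/-! ### Separating vertices by 3-cycles -/

/-- In an acyclically indecomposable tournament any edge `x → y` is separated by a 3-cycle
`C`, in the sense that `x ∈ C` or `x` dominates `C`, and `y ∈ C` or `C` dominates `y`.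
Otherwise `x`, `y` and the vertices between them would form an acyclic autonomous set. -/
theorem exists_cycle {V : Type} {r : V → V → Prop} (h : IsTournament r)
    (hind : AcyclicallyIndecomposable r) {x y : V} (hxy : r x y) :
    ∃ a b c, (r a b ∧ r b c ∧ r c a) ∧ (x = a ∨ (r x a ∧ r x b ∧ r x c)) ∧
      (y = b ∨ (r a y ∧ r b y ∧ r c y)) := by
  by_contra hcon
  have H : ∀ a b c, r a b → r b c → r c a → (x = a ∨ (r x a ∧ r x b ∧ r x c)) →
      (y = b ∨ (r a y ∧ r b y ∧ r c y)) → False := fun a b c h1 h2 h3 h4 h5 =>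
    hcon ⟨a, b, c, ⟨h1, h2, h3⟩, h4, h5⟩
  clear hcon
  have as : ∀ u v, r u v → ¬ r v u := fun u v => tour_asymm h
  have irr := h.1
  have tot : ∀ u v, u ≠ v → r u v ∨ r v u := fun u v => tour_total h
  let A : Set V := {z | z = x ∨ z = y ∨ (r x z ∧ r z y)}
  have key : ∀ w ∈ A, ∀ z ∉ A, (r w z ↔ r x z) := by
    intro w hw z hz
    have hz' : z ≠ x ∧ z ≠ y ∧ ¬ (r x z ∧ r z y) := by
      simpa [A, not_or] using hz
    obtain ⟨zx, zy, zb⟩ := hz'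
    have t1 := tot z x zx
    have t2 := tot z y zy
    have c1 := H x y z hxy
    rcases hw with rfl | rfl | ⟨w1, w2⟩
    · rfl
    · have := as x z
      have := as w z
      tauto
    · have hwz : w ≠ z := by
        rintro rfl; exact zb ⟨w1, w2⟩
      have t3 := tot w z hwz
      have c2 := H w y z w2
      have c3 := H x w z w1
      grind
  have hA : Autonomous r A := fun w hw w' hw' z hz => by
    rw [key w hw z hz, key w' hw' z hz]
  have nx : ∀ c ∈ A, ¬ r c x := by
    rintro c (rfl | rfl | ⟨h1, h2⟩) hc
    · exact irr _ hc
    · exact as _ _ hxy hc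
    · exact as _ _ h1 hc
  have ny : ∀ c ∈ A, ¬ r y c := by
    rintro c (rfl | rfl | ⟨h1, h2⟩) hc
    · exact as _ _ hxy hc
    · exact irr _ hc
    · exact as _ _ h2 hc
  have hA' : AcyclicSet r A := by
    rintro ⟨a, ha, b, hb, c, hc, hab, hbc, hca⟩
    have mid : ∀ u ∈ A, ∀ v ∈ A, ∀ w ∈ A, r u v → r w u → r x u ∧ r u y := by
      rintro u (rfl | rfl | hu) v hv w hw huv hwu
      · exact absurd hwu (nx w hw)
      · exact absurd huv (ny v hv)
      · exact hu
    have m1 := mid a ha b hb c hc hab hca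
    have m2 := mid b hb c hc a ha hbc hab
    have m3 := mid c hc a ha b hb hca hbc
    exact H a b c hab hbc hca (Or.inr ⟨m1.1, m2.1, m3.1⟩) (Or.inr ⟨m1.2, m2.2, m3.2⟩)
  have := hind A hA hA' (show x ∈ A from Or.inl rfl) (show y ∈ A from Or.inr (Or.inl rfl))
  subst this
  exact irr _ hxy

/-! ### Recognizing the six tournaments -/

/-- Some member of `𝔅_{n̲}` embeds into `r`. -/
def Good {V : Type} (r : V → V → Prop) (n : ℕ) : Prop := ∃ S ∈ frakBn n, S.EmbedsIn r

/-- A homomorphism from a tournament to a tournament is an embedding. -/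
theorem embeds_of_hom {V : Type} {r : V → V → Prop} (h : IsTournament r) (S : Tour)
    (f : S.V → V) (ht : ∀ x y, x ≠ y → S.rel x y ∨ S.rel y x)
    (hf : ∀ x y, S.rel x y → r (f x) (f y)) : S.EmbedsIn r := by
  refine ⟨f, ?_, fun x y => ⟨hf x y, fun hxy => ?_⟩⟩
  · intro x y e
    by_contra hne
    rcases ht x y hne with h1 | h1
    · have := hf _ _ h1; rw [e] at this; exact h.1 _ this
    · have := hf _ _ h1; rw [e] at this; exact h.1 _ this
  · by_cases e : x = y
    · subst e; exact absurd hxy (h.1 _)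
    · rcases ht x y e with h1 | h1
      · exact h1
      · exact absurd (hf _ _ h1) (tour_asymm h hxy)

section embed
variable {V : Type} {r : V → V → Prop} {n : ℕ}

/-- Rows `P 0`, `P 1`, `P 2` of length `n` with the edges of `C3[n̲]`. In this lemma and the
next five, only the first `n` entries of a row matter. -/
theorem good_c3 (h : IsTournament r) (P : Fin 3 → ℕ → V)
    (h1 : ∀ u v i j, i < j → j < n → r (P u i) (P v j))
    (h2 : ∀ i, i < n → r (P 0 i) (P 1 i) ∧ r (P 1 i) (P 2 i) ∧ r (P 2 i) (P 0 i)) :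
    Good r n := by
  refine ⟨c3Tour (Fin n) (· < ·), by simp [frakBn], ?_⟩
  refine embeds_of_hom h _ (fun z : Fin n × Fin 3 => P z.2 z.1) ?_ ?_
  · rintro ⟨i, u⟩ ⟨j, v⟩ hne
    show c3Rel _ _ _ ∨ c3Rel _ _ _
    rcases lt_trichotomy i j with hij | rfl | hij
    · exact Or.inl (Or.inl hij)
    · have huv : u ≠ v := fun e => hne (by rw [e])
      revert huv
      fin_cases u <;> fin_cases v <;> simp [c3Rel]
    · exact Or.inr (Or.inl hij)
  · rintro ⟨i, u⟩ ⟨j, v⟩ (hij | ⟨hij, hh⟩)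
    · exact h1 u v i j hij j.2
    · dsimp only at hij hh
      subst hij
      have := h2 i i.2
      rcases hh with ⟨rfl, rfl⟩ | ⟨rfl, rfl⟩ | ⟨rfl, rfl⟩
      · exact this.1
      · exact this.2.1
      · exact this.2.2

theorem good_v (h : IsTournament r) (e : V) (P Q : ℕ → V)
    (h1 : ∀ i j, i < j → j < n → r (P i) (P j) ∧ r (Q i) (Q j) ∧ r (P i) (Q j) ∧ r (Q i) (P j))
    (h2 : ∀ i, i < n → r e (P i) ∧ r (P i) (Q i) ∧ r (Q i) e) :
    Good r n := by
  refine ⟨vTour (Fin n) (· < ·), by simp [frakBn], ?_⟩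
  refine embeds_of_hom h _ (fun z : Option (Fin n × Fin 2) => match z with
    | none => e
    | some z => if z.2 = 0 then P z.1 else Q z.1) ?_ ?_
  · show ∀ x y : Option (Fin n × Fin 2), x ≠ y → vRel _ x y ∨ vRel _ y x
    rintro (_ | ⟨i, u⟩) (_ | ⟨j, v⟩) hne
    · exact absurd rfl hne
    · fin_cases v <;> simp [vRel]
    · fin_cases u <;> simp [vRel]
    · rcases lt_trichotomy i j with hij | rfl | hij
      · exact Or.inl (Or.inl hij)
      · have huv : u ≠ v := fun e => hne (by rw [e])
        revert huv
        fin_cases u <;> fin_cases v <;> simp [vRel]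
      · exact Or.inr (Or.inl hij)
  · show ∀ x y : Option (Fin n × Fin 2), vRel _ x y → _
    rintro (_ | ⟨i, u⟩) (_ | ⟨j, v⟩) hxy
    · exact absurd hxy id
    · change v = 0 at hxy
      subst hxy
      exact (h2 j j.2).1
    · change u = 1 at hxy
      subst hxy
      exact (h2 i i.2).2.2
    · rcases hxy with hij | ⟨hij, hu, hv⟩
      · have := h1 i j hij j.2
        fin_cases u <;> fin_cases v <;> simp <;> tauto
      · dsimp only at hij hu hv
        subst hij hu hv
        exact (h2 i i.2).2.1

theorem good_t (h : IsTournament r) (P Q : ℕ → V)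
    (h1 : ∀ i j, i < j → j < n → r (P i) (P j) ∧ r (Q i) (Q j) ∧ r (Q j) (P i) ∧ r (P j) (Q i))
    (h2 : ∀ i, i < n → r (P i) (Q i)) : Good r n := by
  refine ⟨tTour (Fin n) (· < ·), by simp [frakBn], ?_⟩
  refine embeds_of_hom h _ (fun z : Fin n × Fin 2 => if z.2 = 0 then P z.1 else Q z.1) ?_ ?_
  · rintro ⟨i, u⟩ ⟨j, v⟩ hne
    show tRel _ _ _ ∨ tRel _ _ _
    rcases lt_trichotomy i j with hij | rfl | hij
    · fin_cases u <;> fin_cases v <;> simp [tRel, hij]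
    · have huv : u ≠ v := fun e => hne (by rw [e])
      revert huv
      fin_cases u <;> fin_cases v <;> simp [tRel]
    · fin_cases u <;> fin_cases v <;> simp [tRel, hij]
  · rintro ⟨i, u⟩ ⟨j, v⟩ (⟨rfl, rfl, hh⟩ | ⟨hh, rfl, rfl⟩ | ⟨rfl, rfl, hh⟩ | ⟨rfl, rfl, hh⟩ | ⟨rfl, rfl, hh⟩)
    · exact (h1 i j hh j.2).1
    · dsimp only at hh
      subst hh
      exact h2 i i.2
    · exact (h1 i j hh j.2).2.1
    · exact (h1 j i hh i.2).2.2.1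
    · exact (h1 j i hh i.2).2.2.2

theorem good_u (h : IsTournament r) (P Q : ℕ → V)
    (h1 : ∀ i j, i < j → j < n → r (P i) (P j) ∧ r (Q j) (Q i) ∧ r (P i) (Q j) ∧ r (Q i) (P j))
    (h2 : ∀ i, i < n → r (P i) (Q i)) : Good r n := by
  refine ⟨uTour (Fin n) (· < ·), by simp [frakBn], ?_⟩
  refine embeds_of_hom h _ (fun z : Fin n × Fin 2 => if z.2 = 0 then P z.1 else Q z.1) ?_ ?_
  · rintro ⟨i, u⟩ ⟨j, v⟩ hne
    show uRel _ _ _ ∨ uRel _ _ _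
    rcases lt_trichotomy i j with hij | rfl | hij
    · fin_cases u <;> fin_cases v <;> simp [uRel, hij]
    · have huv : u ≠ v := fun e => hne (by rw [e])
      revert huv
      fin_cases u <;> fin_cases v <;> simp [uRel]
    · fin_cases u <;> fin_cases v <;> simp [uRel, hij]
  · rintro ⟨i, u⟩ ⟨j, v⟩ (⟨rfl, rfl, hh⟩ | ⟨hh, rfl, rfl⟩ | ⟨rfl, rfl, hh⟩ | ⟨rfl, rfl, hh⟩ | ⟨rfl, rfl, hh⟩)
    · exact (h1 i j hh j.2).1
    · dsimp only at hh
      subst hh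
      exact h2 i i.2
    · exact (h1 j i hh i.2).2.1
    · exact (h1 i j hh j.2).2.2.1
    · exact (h1 i j hh j.2).2.2.2

theorem good_h (h : IsTournament r) (P Q : ℕ → V)
    (h1 : ∀ i j, i < j → j < n → r (P i) (P j) ∧ r (Q i) (Q j) ∧ r (Q j) (P i) ∧ r (Q i) (P j))
    (h2 : ∀ i, i < n → r (P i) (Q i)) : Good r n := by
  refine ⟨hTour (Fin n) (· < ·), by simp [frakBn], ?_⟩
  refine embeds_of_hom h _ (fun z : Fin n × Fin 2 => if z.2 = 0 then P z.1 else Q z.1) ?_ ?_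
  · rintro ⟨i, u⟩ ⟨j, v⟩ hne
    show hRel _ _ _ ∨ hRel _ _ _
    rcases lt_trichotomy i j with hij | rfl | hij
    · fin_cases u <;> fin_cases v <;> simp [hRel, hij]
    · have huv : u ≠ v := fun e => hne (by rw [e])
      revert huv
      fin_cases u <;> fin_cases v <;> simp [hRel]
    · fin_cases u <;> fin_cases v <;> simp [hRel, hij]
  · rintro ⟨i, u⟩ ⟨j, v⟩ (⟨rfl, rfl, hh⟩ | ⟨hh, rfl, rfl⟩ | ⟨rfl, rfl, hh⟩ | ⟨rfl, rfl, hh⟩ | ⟨rfl, rfl, hh⟩)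
    · exact (h1 i j hh j.2).1
    · dsimp only at hh
      subst hh
      exact h2 i i.2
    · exact (h1 i j hh j.2).2.1
    · exact (h1 j i hh i.2).2.2.1
    · exact (h1 i j hh j.2).2.2.2

theorem good_k (h : IsTournament r) (P Q : ℕ → V)
    (h1 : ∀ i j, i < j → j < n → r (P i) (P j) ∧ r (Q j) (Q i) ∧ r (Q j) (P i) ∧ r (Q i) (P j))
    (h2 : ∀ i, i < n → r (P i) (Q i)) : Good r n := by
  refine ⟨kTour (Fin n) (· < ·), by simp [frakBn], ?_⟩
  refine embeds_of_hom h _ (fun z : Fin n × Fin 2 => if z.2 = 0 then P z.1 else Q z.1) ?_ ?_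
  · rintro ⟨i, u⟩ ⟨j, v⟩ hne
    show kRel _ _ _ ∨ kRel _ _ _
    rcases lt_trichotomy i j with hij | rfl | hij
    · fin_cases u <;> fin_cases v <;> simp [kRel, hij]
    · have huv : u ≠ v := fun e => hne (by rw [e])
      revert huv
      fin_cases u <;> fin_cases v <;> simp [kRel]
    · fin_cases u <;> fin_cases v <;> simp [kRel, hij]
  · rintro ⟨i, u⟩ ⟨j, v⟩ (⟨rfl, rfl, hh⟩ | ⟨hh, rfl, rfl⟩ | ⟨rfl, rfl, hh⟩ | ⟨rfl, rfl, hh⟩ | ⟨rfl, rfl, hh⟩)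
    · exact (h1 i j hh j.2).1
    · dsimp only at hh
      subst hh
      exact h2 i i.2
    · exact (h1 j i hh i.2).2.1
    · exact (h1 j i hh i.2).2.2.1
    · exact (h1 i j hh j.2).2.2.2

end embed

/-! ### Homogeneous rows -/

/-- The rows `p`, `q` of length `M` are homogeneous: for `i < j < M`, the relation between
`p i` and `q j` (one of the two edges, or neither if they coincide) does not depend
on `i, j`. -/
def Unif {V : Type} (r : V → V → Prop) (M : ℕ) (p q : ℕ → V) : Prop :=
  ∀ i j i' j', i < j → j < M → i' < j' → j' < M →
    ((r (p i) (q j) ↔ r (p i') (q j')) ∧ (r (q j) (p i) ↔ r (q j') (p i')))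

/-- The row `p` dominates the row `q`. -/
def Dom {V : Type} (r : V → V → Prop) (M : ℕ) (p q : ℕ → V) : Prop :=
  ∀ i j, i < M → j < M → r (p i) (q j)

/-- The rows `p`, `q` form the increasing chain `p 0, q 0, p 1, q 1, …` (the edges
`p i → q i` are not included). -/
def SumUp {V : Type} (r : V → V → Prop) (M : ℕ) (p q : ℕ → V) : Prop :=
  ∀ i j, i < j → j < M → r (p i) (p j) ∧ r (q i) (q j) ∧ r (p i) (q j) ∧ r (q i) (p j)

/-- Like `SumUp`, with the order of the indices reversed. -/
def SumDown {V : Type} (r : V → V → Prop) (M : ℕ) (p q : ℕ → V) : Prop :=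
  ∀ i j, i < j → j < M → r (p j) (p i) ∧ r (q j) (q i) ∧ r (q j) (p i) ∧ r (p j) (q i)

section rows
variable {V : Type} {r : V → V → Prop} {n M : ℕ}

/-- Homogeneous rows `p`, `q` are forward, backward or coincide at all `i < j`. -/
theorem unif_cases (h : IsTournament r) (hM : 3 ≤ M) {p q : ℕ → V} (hu : Unif r M p q) :
    (∀ i j, i < j → j < M → r (p i) (q j)) ∨ (∀ i j, i < j → j < M → r (q j) (p i)) ∨
    (∀ i j, i < j → j < M → p i = q j) := by
  by_cases e : p 0 = q 1
  · refine Or.inr (Or.inr fun i j hij hj => ?_)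
    have h1 := hu 0 1 i j (by omega) (by omega) hij hj
    by_contra hne
    have n1 := h.1 (q 1)
    rw [e] at h1
    rcases tour_total h hne with h2 | h2 <;> tauto
  · rcases tour_total h e with h2 | h2
    · exact Or.inl fun i j hij hj => (hu 0 1 i j (by omega) (by omega) hij hj).1.1 h2
    · exact Or.inr (Or.inl fun i j hij hj =>
        (hu 0 1 i j (by omega) (by omega) hij hj).2.1 h2)

/-- Two homogeneous rows with `p i → q i` either contain one of the six tournaments, or one
row dominates the other, or they form a chain. -/
theorem pair_lemma (h : IsTournament r) (hM : n + 3 ≤ M) (p q : ℕ → V)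
    (hpp : Unif r M p p) (hpq : Unif r M p q) (hqp : Unif r M q p) (hqq : Unif r M q q)
    (hd : ∀ i < M, r (p i) (q i)) :
    Good r n ∨ Dom r M p q ∨ SumUp r M p q ∨ SumDown r M p q := by
  have hM3 : 3 ≤ M := by omega
  have dom : (∀ i j, i < j → j < M → r (p i) (q j)) →
      (∀ i j, i < j → j < M → r (p j) (q i)) → Dom r M p q := by
    intro h1 h2 i j hi hj
    rcases lt_trichotomy i j with hij | rfl | hij
    · exact h1 i j hij hj
    · exact hd i hi
    · exact h2 j i hij hi
  have hne : ∀ i < M, p i ≠ q i := fun i hi e => h.1 _ (by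
    have := hd i hi; rwa [e] at this)
  by_cases cp : ∀ i j, i < j → j < M → p i = p j
  · right; left
    refine dom (fun i j hij hj => ?_) (fun i j hij hj => ?_)
    · rw [cp i j hij hj]; exact hd j hj
    · rw [← cp i j hij hj]; exact hd i (by omega)
  by_cases cq : ∀ i j, i < j → j < M → q i = q j
  · right; left
    refine dom (fun i j hij hj => ?_) (fun i j hij hj => ?_)
    · rw [← cq i j hij hj]; exact hd i (by omega)
    · rw [cq i j hij hj]; exact hd j hj
  -- if `p i = q j` for all `i < j`, then `p 1 = q 2 = p 0 = q 1`
  have hpq' : ¬ (∀ i j, i < j → j < M → p i = q j) := fun hh => hne 1 (by omega) (by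
    have e1 := hh 0 2 (by omega) (by omega)
    have e2 := hh 1 2 (by omega) (by omega)
    have e3 := hh 0 1 (by omega) (by omega)
    rw [e2, ← e1, e3])
  have hqp' : ¬ (∀ i j, i < j → j < M → q i = p j) := fun hh => hne 1 (by omega) (by
    have e1 := hh 0 2 (by omega) (by omega)
    have e2 := hh 1 2 (by omega) (by omega)
    have e3 := hh 0 1 (by omega) (by omega)
    rw [← e3, e1, ← e2])
  have pq := unif_cases h hM3 hpq
  have qp := unif_cases h hM3 hqp
  have pq := (or_assoc.2 pq).resolve_right hpq'
  have qp := (or_assoc.2 qp).resolve_right hqp'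
  have pp := (or_assoc.2 (unif_cases h hM3 hpp)).resolve_right cp
  have qq := (or_assoc.2 (unif_cases h hM3 hqq)).resolve_right cq
  rcases pq with pq | pq <;> rcases qp with qp | qp
  -- `p i → q j` iff `i ≤ j`
  · rcases pp with pp | pp <;> rcases qq with qq | qq
    · exact Or.inr (Or.inr (Or.inl fun i j hij hj =>
        ⟨pp i j hij hj, qq i j hij hj, pq i j hij hj, qp i j hij hj⟩))
    · exact Or.inl (good_u h p q (fun i j hij hj => ⟨pp i j hij (by omega),
        qq i j hij (by omega), pq i j hij (by omega), qp i j hij (by omega)⟩)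
        (fun i hi => hd i (by omega)))
    · refine Or.inl (good_u h q (fun i => p (i + 1)) (fun i j hij hj => ⟨qq i j hij (by omega),
        pp _ _ (by omega) (by omega), qp _ _ (by omega) (by omega), ?_⟩)
        (fun i hi => qp _ _ (by omega) (by omega)))
      rcases (show i + 1 ≤ j from hij).eq_or_lt with e | e
      · simp only [e]; exact hd j (by omega)
      · exact pq _ _ e (by omega)
    · exact Or.inl (good_t h (fun i => p (n - 1 - i)) (fun i => q (n - 1 - i))
        (fun i j hij hj => ⟨pp _ _ (by omega) (by omega), qq _ _ (by omega) (by omega),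
          qp _ _ (by omega) (by omega), pq _ _ (by omega) (by omega)⟩)
        (fun i hi => hd _ (by omega)))
  · exact Or.inr (Or.inl (dom pq qp))
  -- `p i → q j` iff `i = j`
  · rcases pp with pp | pp <;> rcases qq with qq | qq
    · exact Or.inl (good_h h p q (fun i j hij hj => ⟨pp i j hij (by omega),
        qq i j hij (by omega), pq i j hij (by omega), qp i j hij (by omega)⟩)
        (fun i hi => hd i (by omega)))
    · exact Or.inl (good_k h p q (fun i j hij hj => ⟨pp i j hij (by omega),
        qq i j hij (by omega), pq i j hij (by omega), qp i j hij (by omega)⟩)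
        (fun i hi => hd i (by omega)))
    · exact Or.inl (good_k h (fun i => p (n - 1 - i)) (fun i => q (n - 1 - i))
        (fun i j hij hj => ⟨pp _ _ (by omega) (by omega), qq _ _ (by omega) (by omega),
          qp _ _ (by omega) (by omega), pq _ _ (by omega) (by omega)⟩)
        (fun i hi => hd _ (by omega)))
    · exact Or.inl (good_h h (fun i => p (n - 1 - i)) (fun i => q (n - 1 - i))
        (fun i j hij hj => ⟨pp _ _ (by omega) (by omega), qq _ _ (by omega) (by omega),
          qp _ _ (by omega) (by omega), pq _ _ (by omega) (by omega)⟩)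
        (fun i hi => hd _ (by omega)))
  -- `p i → q j` iff `j ≤ i`
  · rcases pp with pp | pp <;> rcases qq with qq | qq
    · exact Or.inl (good_t h p q (fun i j hij hj => ⟨pp i j hij (by omega),
        qq i j hij (by omega), pq i j hij (by omega), qp i j hij (by omega)⟩)
        (fun i hi => hd i (by omega)))
    · refine Or.inl (good_u h (fun i => q (n - i)) (fun i => p (n - 1 - i))
        (fun i j hij hj => ⟨qq _ _ (by omega) (by omega), pp _ _ (by omega) (by omega),
          pq _ _ (by omega) (by omega), ?_⟩)
        (fun i hi => pq _ _ (by omega) (by omega)))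
      rcases (show n - j ≤ n - 1 - i by omega).eq_or_lt with e | e
      · simp only [e]; exact hd _ (by omega)
      · exact qp _ _ e (by omega)
    · exact Or.inl (good_u h (fun i => p (n - 1 - i)) (fun i => q (n - 1 - i))
        (fun i j hij hj => ⟨pp _ _ (by omega) (by omega), qq _ _ (by omega) (by omega),
          qp _ _ (by omega) (by omega), pq _ _ (by omega) (by omega)⟩)
        (fun i hi => hd _ (by omega)))
    · exact Or.inr (Or.inr (Or.inr fun i j hij hj =>
        ⟨pp i j hij hj, qq i j hij hj, pq i j hij hj, qp i j hij hj⟩))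

/-- Every two members of the set `R` of rows are homogeneous. -/
def Homog (r : V → V → Prop) (M : ℕ) (R : Set (ℕ → V)) : Prop :=
  ∀ p ∈ R, ∀ q ∈ R, Unif r M p q

theorem pair_homog (h : IsTournament r) (hM : n + 3 ≤ M) {R : Set (ℕ → V)}
    (hR : Homog r M R) {p q : ℕ → V} (hp : p ∈ R) (hq : q ∈ R)
    (hd : ∀ i < M, r (p i) (q i)) :
    Good r n ∨ Dom r M p q ∨ SumUp r M p q ∨ SumDown r M p q :=
  pair_lemma h hM p q (hR p hp p hp) (hR p hp q hq) (hR q hq p hp) (hR q hq q hq) hd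

/-- If one of the two rows is increasing, the last alternative is impossible. -/
theorem pair_up (h : IsTournament r) (hM : n + 3 ≤ M) {R : Set (ℕ → V)}
    (hR : Homog r M R) {p q : ℕ → V} (hp : p ∈ R) (hq : q ∈ R)
    (hd : ∀ i < M, r (p i) (q i)) (hup : r (p 0) (p 1) ∨ r (q 0) (q 1)) :
    Good r n ∨ Dom r M p q ∨ SumUp r M p q := by
  rcases pair_homog h hM hR hp hq hd with hh | hh | hh | hh
  · exact Or.inl hh
  · exact Or.inr (Or.inl hh)
  · exact Or.inr (Or.inr hh)
  · have := hh 0 1 (by omega) (by omega)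
    rcases hup with h1 | h1
    · exact absurd h1 (tour_asymm h this.1)
    · exact absurd h1 (tour_asymm h this.2.1)

/-- Rows of 3-cycles in which two rows form an increasing chain: the third row either sits
in the same chain, giving `C3`, or contains a vertex `e` giving `V`. -/
theorem triple_up (h : IsTournament r) (hM : n + 3 ≤ M) {R : Set (ℕ → V)}
    (hR : Homog r M R) {a b c : ℕ → V} (ha : a ∈ R) (hb : b ∈ R) (hc : c ∈ R)
    (hab : ∀ i < M, r (a i) (b i)) (hbc : ∀ i < M, r (b i) (c i))
    (hca : ∀ i < M, r (c i) (a i)) (hs : SumUp r M a b) : Good r n := by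
  have h01 := hs 0 1 (by omega) (by omega)
  have hsn : ∀ i j, i < j → j < n → _ := fun i j hij hj => hs i j hij (by omega)
  rcases pair_up h hM hR hb hc hbc (Or.inl h01.2.1) with hh | bc | bc
  · exact hh
  all_goals rcases pair_up h hM hR hc ha hca (Or.inr h01.1) with hh | ca | ca
  · exact hh
  · exact good_v h (c 0) a b hsn fun i hi =>
      ⟨ca 0 i (by omega) (by omega), hab i (by omega), bc i 0 (by omega) (by omega)⟩
  · refine good_v h (c 0) a b hsn fun i hi =>
      ⟨?_, hab i (by omega), bc i 0 (by omega) (by omega)⟩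
    rcases Nat.eq_zero_or_pos i with rfl | hi0
    · exact hca _ (by omega)
    · exact (ca 0 i hi0 (by omega)).2.2.1
  · exact hh
  · exact good_v h (c (M - 1)) a b hsn fun i hi =>
      ⟨ca _ i (by omega) (by omega), hab i (by omega),
        (bc i (M - 1) (by omega) (by omega)).2.2.1⟩
  · refine good_c3 h ![a, b, c] (fun u v i j hij hj => ?_)
      (fun i hi => ⟨hab i (by omega), hbc i (by omega), hca i (by omega)⟩)
    have h1 := hsn i j hij hj
    have h2 := bc i j hij (by omega)
    have h3 := ca i j hij (by omega)
    fin_cases u <;> fin_cases v <;> simp <;> tauto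

theorem triple_down (h : IsTournament r) (hM : n + 3 ≤ M) {R : Set (ℕ → V)}
    (hR : Homog r M R) {a b c : ℕ → V} (ha : a ∈ R) (hb : b ∈ R) (hc : c ∈ R)
    (hab : ∀ i < M, r (a i) (b i)) (hbc : ∀ i < M, r (b i) (c i))
    (hca : ∀ i < M, r (c i) (a i)) (hs : SumDown r M a b) : Good r n := by
  have hR' : Homog r M ((fun p i => p (M - 1 - i)) '' R) := by
    rintro _ ⟨p, hp, rfl⟩ _ ⟨q, hq, rfl⟩ i j i' j' hij hj hij' hj'
    exact (hR q hq p hp (M - 1 - j) (M - 1 - i) (M - 1 - j') (M - 1 - i')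
      (by omega) (by omega) (by omega) (by omega)).symm
  refine triple_up h hM hR' ⟨a, ha, rfl⟩ ⟨b, hb, rfl⟩ ⟨c, hc, rfl⟩
    (fun i hi => hab _ (by omega)) (fun i hi => hbc _ (by omega))
    (fun i hi => hca _ (by omega)) fun i j hij hj => ?_
  have := hs (M - 1 - j) (M - 1 - i) (by omega) (by omega)
  exact ⟨this.1, this.2.1, this.2.2.2, this.2.2.1⟩

/-- For rows of 3-cycles, the only bad configuration is a 3-cycle of whole rows. -/
theorem triple_dom (h : IsTournament r) (hM : n + 3 ≤ M) {R : Set (ℕ → V)}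
    (hR : Homog r M R) {a b c : ℕ → V} (ha : a ∈ R) (hb : b ∈ R) (hc : c ∈ R)
    (hab : ∀ i < M, r (a i) (b i)) (hbc : ∀ i < M, r (b i) (c i))
    (hca : ∀ i < M, r (c i) (a i)) :
    Good r n ∨ (Dom r M a b ∧ Dom r M b c ∧ Dom r M c a) := by
  rcases pair_homog h hM hR ha hb hab with hh | h1 | hh | hh
  · exact Or.inl hh
  rotate_left
  · exact Or.inl (triple_up h hM hR ha hb hc hab hbc hca hh)
  · exact Or.inl (triple_down h hM hR ha hb hc hab hbc hca hh)
  rcases pair_homog h hM hR hb hc hbc with hh | h2 | hh | hh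
  · exact Or.inl hh
  rotate_left
  · exact Or.inl (triple_up h hM hR hb hc ha hbc hca hab hh)
  · exact Or.inl (triple_down h hM hR hb hc ha hbc hca hab hh)
  rcases pair_homog h hM hR hc ha hca with hh | h3 | hh | hh
  · exact Or.inl hh
  rotate_left
  · exact Or.inl (triple_up h hM hR hc ha hb hca hab hbc hh)
  · exact Or.inl (triple_down h hM hR hc ha hb hca hab hbc hh)
  exact Or.inr ⟨h1, h2, h3⟩

/-- The row `x` lies below three rows `a`, `b`, `c` which form a 3-cycle of whole rows, and
`x`, `a` form a chain. Then some vertex of `a`, `b` or `c` gives a copy of `V`. -/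
theorem below_sum (h : IsTournament r) (hM : n + 3 ≤ M) {R : Set (ℕ → V)}
    (hR : Homog r M R) {x a b c : ℕ → V} (hx : x ∈ R) (hb : b ∈ R) (hc : c ∈ R)
    (dab : Dom r M a b) (dbc : Dom r M b c) (dca : Dom r M c a)
    (hxa : ∀ i < M, r (x i) (a i)) (hxb : ∀ i < M, r (x i) (b i))
    (hxc : ∀ i < M, r (x i) (c i)) (hs : SumUp r M x a) : Good r n := by
  have x01 := (hs 0 1 (by omega) (by omega)).1
  rcases pair_up h hM hR hx hb hxb (Or.inl x01) with hh | xb | xb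
  · exact hh
  · rcases pair_up h hM hR hx hc hxc (Or.inl x01) with hh | xc | xc
    · exact hh
    -- `c → a → x → c`
    · refine good_v h (c 0) a (fun i => x (i + 1)) (fun i j hij hj => ⟨
        (hs i j hij (by omega)).2.1, (hs (i + 1) (j + 1) (by omega) (by omega)).1,
        (hs i (j + 1) (by omega) (by omega)).2.2.2, ?_⟩)
        (fun i hi => ⟨dca _ _ (by omega) (by omega),
          (hs i (i + 1) (by omega) (by omega)).2.2.2, xc _ _ (by omega) (by omega)⟩)
      rcases (show i + 1 ≤ j from hij).eq_or_lt with e | e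
      · simp only [e]; exact hxa j (by omega)
      · exact (hs _ _ e (by omega)).2.2.1
    -- `b → c → x → b`
    · refine good_v h (b 0) c (fun i => x (i + 1)) (fun i j hij hj => ⟨
        (xc i j hij (by omega)).2.1, (hs (i + 1) (j + 1) (by omega) (by omega)).1,
        (xc i (j + 1) (by omega) (by omega)).2.2.2, ?_⟩)
        (fun i hi => ⟨dbc _ _ (by omega) (by omega),
          (xc i (i + 1) (by omega) (by omega)).2.2.2, xb _ _ (by omega) (by omega)⟩)
      rcases (show i + 1 ≤ j from hij).eq_or_lt with e | e
      · simp only [e]; exact hxc j (by omega)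
      · exact (xc _ _ e (by omega)).2.2.1
  -- `a (M - 1) → b → x → a (M - 1)`
  · refine good_v h (a (M - 1)) b (fun i => x (i + 1)) (fun i j hij hj => ⟨
      (xb i j hij (by omega)).2.1, (hs (i + 1) (j + 1) (by omega) (by omega)).1,
      (xb i (j + 1) (by omega) (by omega)).2.2.2, ?_⟩)
      (fun i hi => ⟨dab _ _ (by omega) (by omega),
        (xb i (i + 1) (by omega) (by omega)).2.2.2,
        (hs (i + 1) (M - 1) (by omega) (by omega)).2.2.1⟩)
    rcases (show i + 1 ≤ j from hij).eq_or_lt with e | e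
    · simp only [e]; exact hxb j (by omega)
    · exact (xb _ _ e (by omega)).2.2.1

/-- The mirror image of `below_sum`. -/
theorem above_sum (h : IsTournament r) (hM : n + 3 ≤ M) {R : Set (ℕ → V)}
    (hR : Homog r M R) {y a b c : ℕ → V} (hy : y ∈ R) (hb : b ∈ R) (hc : c ∈ R)
    (dab : Dom r M a b) (dbc : Dom r M b c) (dca : Dom r M c a)
    (hay : ∀ i < M, r (a i) (y i)) (hby : ∀ i < M, r (b i) (y i))
    (hcy : ∀ i < M, r (c i) (y i)) (hs : SumUp r M a y) : Good r n := by
  have y01 := (hs 0 1 (by omega) (by omega)).2.1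
  rcases pair_up h hM hR hc hy hcy (Or.inr y01) with hh | cy | cy
  · exact hh
  · rcases pair_up h hM hR hb hy hby (Or.inr y01) with hh | bdy | bdy
    · exact hh
    -- `b → y → a → b`
    · refine good_v h (b 0) y (fun i => a (i + 1)) (fun i j hij hj => ⟨
        (hs i j hij (by omega)).2.1, (hs (i + 1) (j + 1) (by omega) (by omega)).1,
        (hs i (j + 1) (by omega) (by omega)).2.2.2, ?_⟩)
        (fun i hi => ⟨bdy _ _ (by omega) (by omega),
          (hs i (i + 1) (by omega) (by omega)).2.2.2, dab _ _ (by omega) (by omega)⟩)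
      rcases (show i + 1 ≤ j from hij).eq_or_lt with e | e
      · simp only [e]; exact hay j (by omega)
      · exact (hs _ _ e (by omega)).2.2.1
    -- `c → y → b → c`
    · refine good_v h (c 0) y (fun i => b (i + 1)) (fun i j hij hj => ⟨
        (hs i j hij (by omega)).2.1, (bdy (i + 1) (j + 1) (by omega) (by omega)).1,
        (bdy i (j + 1) (by omega) (by omega)).2.2.2, ?_⟩)
        (fun i hi => ⟨cy _ _ (by omega) (by omega),
          (bdy i (i + 1) (by omega) (by omega)).2.2.2, dbc _ _ (by omega) (by omega)⟩)
      rcases (show i + 1 ≤ j from hij).eq_or_lt with e | e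
      · simp only [e]; exact hby j (by omega)
      · exact (bdy _ _ e (by omega)).2.2.1
  -- `a 0 → y → c → a 0`
  · refine good_v h (a 0) y (fun i => c (i + 1)) (fun i j hij hj => ⟨
      (hs i j hij (by omega)).2.1, (cy (i + 1) (j + 1) (by omega) (by omega)).1,
      (cy i (j + 1) (by omega) (by omega)).2.2.2, ?_⟩)
      (fun i hi => ⟨?_, (cy i (i + 1) (by omega) (by omega)).2.2.2,
        dca _ _ (by omega) (by omega)⟩)
    · rcases (show i + 1 ≤ j from hij).eq_or_lt with e | e
      · simp only [e]; exact hcy j (by omega)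
      · exact (cy _ _ e (by omega)).2.2.1
    · rcases Nat.eq_zero_or_pos i with rfl | hi0
      · exact hay _ (by omega)
      · exact (hs 0 i hi0 (by omega)).2.2.1

/-- A chain `x 0 → y 0 → x 1 → y 1 → …` together with separating 3-cycles
`(a i, b i, c i)`, all homogeneous, contains one of the six tournaments. -/
theorem good_of_rows (h : IsTournament r) (hM : n + 3 ≤ M) {R : Set (ℕ → V)}
    (hR : Homog r M R) {x y a b c : ℕ → V} (hx : x ∈ R) (hy : y ∈ R)
    (ha : a ∈ R) (hb : b ∈ R) (hc : c ∈ R)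
    (hab : ∀ i < M, r (a i) (b i)) (hbc : ∀ i < M, r (b i) (c i))
    (hca : ∀ i < M, r (c i) (a i))
    (hxy : ∀ i < M, r (x i) (y i)) (hs : SumUp r M x y)
    (hX : (∀ i < M, x i = a i) ∨ (∀ i < M, r (x i) (a i) ∧ r (x i) (b i) ∧ r (x i) (c i)))
    (hY : (∀ i < M, y i = b i) ∨ (∀ i < M, r (a i) (y i) ∧ r (b i) (y i) ∧ r (c i) (y i))) :
    Good r n := by
  have x01 := (hs 0 1 (by omega) (by omega)).1
  have y01 := (hs 0 1 (by omega) (by omega)).2.1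
  -- a vertex `e` with `y → x → e → y` gives `V` on the chain `y 0, x 1, y 1, x 2, …`
  have final : ∀ e, (∀ i < M, r e (y i)) → (∀ i < M, r (x i) e) → Good r n := by
    intro e h1 h2
    refine good_v h e y (fun i => x (i + 1)) (fun i j hij hj => ⟨
        (hs i j hij (by omega)).2.1, (hs (i + 1) (j + 1) (by omega) (by omega)).1,
        (hs i (j + 1) (by omega) (by omega)).2.2.2, ?_⟩)
        (fun i hi => ⟨h1 _ (by omega),
          (hs i (i + 1) (by omega) (by omega)).2.2.2, h2 _ (by omega)⟩)
    rcases (show i + 1 ≤ j from hij).eq_or_lt with e | e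
    · simp only [e]; exact hxy j (by omega)
    · exact (hs _ _ e (by omega)).2.2.1
  rcases triple_dom h hM hR ha hb hc hab hbc hca with hh | ⟨dab, dbc, dca⟩
  · exact hh
  rcases hX with hX | hX <;> rcases hY with hY | hY
  · have h1 := (hs 0 1 (by omega) (by omega)).2.2.2
    rw [hY 0 (by omega), hX 1 (by omega)] at h1
    exact absurd (dab 1 0 (by omega) (by omega)) (tour_asymm h h1)
  · rcases pair_up h hM hR hb hy (fun i hi => (hY i hi).2.1) (Or.inr y01) with hh | bdy | bdy
    · exact hh
    · refine final (b 0) (fun i hi => bdy _ _ (by omega) hi) (fun i hi => ?_)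
      rw [hX i hi]; exact dab _ _ hi (by omega)
    · refine good_v h (x (M - 1)) b y (fun i j hij hj => bdy i j hij (by omega)) fun i hi =>
        ⟨?_, (hY i (by omega)).2.1, (hs i (M - 1) (by omega) (by omega)).2.2.2⟩
      rw [hX _ (by omega)]; exact dab _ _ (by omega) (by omega)
  · rcases pair_up h hM hR hx ha (fun i hi => (hX i hi).1) (Or.inl x01) with hh | xa | xa
    · exact hh
    · refine final (a 0) (fun i hi => ?_) (fun i hi => xa _ _ hi (by omega))
      rw [hY i hi]; exact dab _ _ (by omega) hi
    · refine good_v h (y 0) (fun i => x (i + 1)) (fun i => a (i + 1))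
        (fun i j hij hj => xa _ _ (by omega) (by omega)) fun i hi =>
        ⟨(hs 0 (i + 1) (by omega) (by omega)).2.2.2, (hX _ (by omega)).1, ?_⟩
      rw [hY _ (by omega)]; exact dab _ _ (by omega) (by omega)
  · rcases pair_up h hM hR hx ha (fun i hi => (hX i hi).1) (Or.inl x01) with hh | xa | xa
    · exact hh
    · rcases pair_up h hM hR ha hy (fun i hi => (hY i hi).1) (Or.inr y01) with hh | ay | ay
      · exact hh
      · exact final (a 0) (fun i hi => ay _ _ (by omega) hi) (fun i hi => xa _ _ hi (by omega))
      · exact above_sum h hM hR hy hb hc dab dbc dca (fun i hi => (hY i hi).1)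
          (fun i hi => (hY i hi).2.1) (fun i hi => (hY i hi).2.2) ay
    · exact below_sum h hM hR hx hb hc dab dbc dca (fun i hi => (hX i hi).1)
        (fun i hi => (hX i hi).2.1) (fun i hi => (hX i hi).2.2) xa

end rows

/-! ### Extracting homogeneous rows -/

/-- A large tournament contains a long transitive chain. -/
theorem exists_chain (L : ℕ) : ∃ N : ℕ, ∀ (V : Type) (r : V → V → Prop), IsTournament r →
    Finite V → N ≤ Nat.card V → ∃ x : ℕ → V, ∀ i j, i < j → j < L → r (x i) (x j) := by
  obtain ⟨N, hN⟩ := ramsey Prop (L + 2)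
  refine ⟨N + 1, fun V r h hV hc => ?_⟩
  let e := Finite.equivFin V
  let f : ℕ → V := fun i => if hi : i < Nat.card V then e.symm ⟨i, hi⟩
    else e.symm ⟨0, by omega⟩
  have hf : ∀ i j, i < N → j < N → f i = f j → i = j := by
    intro i j hi hj hij
    have hi' : i < Nat.card V := by omega
    have hj' : j < Nat.card V := by omega
    simpa [f, hi', hj'] using hij
  obtain ⟨g, g1, g2, g3⟩ := hN fun i j => r (f i) (f j)
  by_cases h0 : r (f (g 0)) (f (g 1))
  · refine ⟨fun i => f (g i), fun i j hij hj => ?_⟩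
    have := g3 0 1 i j (by omega) (by omega) hij (by omega)
    exact this ▸ h0
  · refine ⟨fun i => f (g (L - 1 - i)), fun i j hij hj => ?_⟩
    have := g3 0 1 (L - 1 - j) (L - 1 - i) (by omega) (by omega) (by omega) (by omega)
    have hn : ¬ r (f (g (L - 1 - j))) (f (g (L - 1 - i))) := fun hh => h0 (this ▸ hh)
    refine (tour_total h fun e => ?_).resolve_right hn
    have e1 := hf _ _ (g1 _ (by omega)) (g1 _ (by omega)) e
    have e2 := g2 (L - 1 - j) (L - 1 - i) (by omega) (by omega)
    omega

/-- Apply Ramsey's theorem to consecutive pairs of a long chain together with their separating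
3-cycles, colouring a pair of indices by all relations between the two 5-tuples. -/
theorem exists_good (n : ℕ) : ∃ a : ℕ, ∀ (V : Type) (r : V → V → Prop), IsTournament r → Finite V →
    a ≤ Nat.card V → AcyclicallyIndecomposable r → Good r n := by
  obtain ⟨L, hL⟩ := ramsey ((Fin 5 → Fin 5 → Prop × Prop) × Prop × Prop) (n + 4)
  obtain ⟨N, hN⟩ := exists_chain (2 * L)
  refine ⟨N, fun V r h hV hc hind => ?_⟩
  obtain ⟨z, hz⟩ := hN V r h hV hc
  have hcyc : ∀ i, ∃ a b c, i < L → (r a b ∧ r b c ∧ r c a) ∧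
      (z (2 * i) = a ∨ (r (z (2 * i)) a ∧ r (z (2 * i)) b ∧ r (z (2 * i)) c)) ∧
      (z (2 * i + 1) = b ∨ (r a (z (2 * i + 1)) ∧ r b (z (2 * i + 1)) ∧ r c (z (2 * i + 1)))) := by
    intro i
    by_cases hi : i < L
    · obtain ⟨a, b, c, hh⟩ := exists_cycle h hind
        (hz (2 * i) (2 * i + 1) (by omega) (by omega))
      exact ⟨a, b, c, fun _ => hh⟩
    · exact ⟨z 0, z 0, z 0, fun hi' => absurd hi' hi⟩
  choose a b c habc using hcyc
  let G : Fin 5 → ℕ → V := ![fun i => z (2 * i), fun i => z (2 * i + 1), a, b, c]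
  obtain ⟨f, f1, f2, f3⟩ := hL fun i j =>
    (fun u v => (r (G u i) (G v j), r (G v j) (G u i)), z (2 * i) = a i, z (2 * i + 1) = b i)
  have hR : Homog r (n + 3) (Set.range fun u i => G u (f i)) := by
    rintro _ ⟨u, rfl⟩ _ ⟨v, rfl⟩ i j i' j' hij hj hij' hj'
    have h1 := congrArg Prod.fst (f3 i j i' j' hij (by omega) hij' (by omega))
    have h2 := congrFun (congrFun h1 u) v
    exact ⟨iff_of_eq (congrArg Prod.fst h2), iff_of_eq (congrArg Prod.snd h2)⟩
  -- the colour of `(i, i + 1)` records the position of the chain relative to the `i`-th cycle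
  have hcol : ∀ i < n + 3, ((z (2 * f i) = a (f i) ↔ z (2 * f 0) = a (f 0))) ∧
      (z (2 * f i + 1) = b (f i) ↔ z (2 * f 0 + 1) = b (f 0)) := by
    intro i hi
    have h1 := congrArg Prod.snd (f3 i (i + 1) 0 1 (by omega) (by omega) (by omega) (by omega))
    exact ⟨iff_of_eq (congrArg Prod.fst h1), iff_of_eq (congrArg Prod.snd h1)⟩
  have hcy := fun i (hi : i < n + 3) => habc (f i) (f1 i (by omega))
  refine good_of_rows h le_rfl hR ⟨0, rfl⟩ ⟨1, rfl⟩ ⟨2, rfl⟩ ⟨3, rfl⟩ ⟨4, rfl⟩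
    (fun i hi => (hcy i hi).1.1) (fun i hi => (hcy i hi).1.2.1) (fun i hi => (hcy i hi).1.2.2)
    (fun i hi => hz _ _ (by omega) (by have := f1 i (by omega); omega))
    (fun i j hij hj => ?_) ?_ ?_
  · have := f2 i j hij (by omega)
    have := f1 j (by omega)
    exact ⟨hz _ _ (by omega) (by omega), hz _ _ (by omega) (by omega),
      hz _ _ (by omega) (by omega), hz _ _ (by omega) (by omega)⟩
  · by_cases h0 : z (2 * f 0) = a (f 0)
    · exact Or.inl fun i hi => (hcol i hi).1.2 h0
    · exact Or.inr fun i hi => (hcy i hi).2.1.resolve_left fun e => h0 ((hcol i hi).1.1 e)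
  · by_cases h0 : z (2 * f 0 + 1) = b (f 0)
    · exact Or.inl fun i hi => (hcol i hi).2.2 h0
    · exact Or.inr fun i hi => (hcy i hi).2.2.resolve_left fun e => h0 ((hcol i hi).2.1 e)

end FinMorph

/-- For every `n` there is `a(n)` such that every finite acyclically
indecomposable tournament with at least `a(n)` vertices contains a subtournament
isomorphic to `Š` for some `S ∈ 𝔅_{n̲}`, where `Š` is the quotient tournament of `S`
on its acyclic components. -/
theorem finitary_morphology (n : ℕ) :
    ∃ a : ℕ, ∀ (V : Type) (r : V → V → Prop), IsTournament r → Finite V →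
      a ≤ Nat.card V → AcyclicallyIndecomposable r →
      ∃ S ∈ frakBn n, (Tour.check S).EmbedsIn r := by
  obtain ⟨a, ha⟩ := FinMorph.exists_good n
  refine ⟨a, fun V r h hV hc hind => ?_⟩
  obtain ⟨S, hS, hSr⟩ := ha V r h hV hc hind
  exact ⟨S, hS, FinMorph.check_embeds S h hSr⟩
end

section
/- Let T be an infinite tournament. Then either T is a lexicographical sum of acyclic tournaments indexed by a finite tournament, or T contains a subtournament isomorphic to a member of 𝔅. -/
/-! To lie in a common acyclic autonomous set is an equivalence relation on vertices (`Eqv`), whose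
classes are acyclic and autonomous. If it has finitely many classes, the tournament is the lexicographical
sum of its classes over a finite tournament (`finite_lexsum`).

Suppose there are infinitely many classes. Ramsey's theorem gives pairwise inequivalent vertices
forming a chain of type `ω` or `ω*`; as `𝔅` is closed under reversal of edges up to isomorphism
(`obs_flip`), the type `ω` suffices. For `x → y`, inequivalence has a witness with at most three
vertices (`sep_witness`): otherwise `x`, `y` and the vertices `z` with `x → z → y` together form
an acyclic autonomous set. Taking consecutive pairs of the chain yields sequences `x 0 → y 0 → x 1 →
y 1 → ⋯` together with witness sequences, and a second use of Ramsey's theorem makes the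
relation between any two of these sequences depend only on the order of the indices.

A vertex that separates the `x i` from the `y i` yields `V[ω]`, and two sequences whose
relation is not of the trivial kinds yield `T`, `U`, `H` or `K`. Hence a witness sequence lying
between the `x i` and the `y i` may be assumed to interleave with them (`between`), witnesses
closing a 3-cycle over an interleaved chain always produce a member of `𝔅` (`cycle_over_chain`), and
3-cycles lying between `x i` and `y i` give `C3[ω]` if nothing else appears first. -/

universe u v

/-! ### Recognizing members of `𝔅` -/

/-- `r` contains a copy of a member of `𝔅`. -/
def Obs {V : Type u} (r : V → V → Prop) : Prop := ∃ S ∈ frakB, S.EmbedsIn r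

/-- `lt` is one of the two chains over which `𝔅` is built. -/
def IsOmegaLike (lt : ℕ → ℕ → Prop) : Prop := lt = omegaLT ∨ lt = omegaStarLT

section

variable {V : Type u} {r : V → V → Prop}

lemma IsTournament.asymm (hT : IsTournament r) {x y : V} (h : r x y) : ¬ r y x := by
  by_cases e : x = y
  · subst e; exact hT.1 x
  · exact (hT.2 x y e).1 h

lemma IsTournament.irr (hT : IsTournament r) (x : V) : ¬ r x x := hT.1 x

lemma IsTournament.tot (hT : IsTournament r) (x y : V) : r x y ∨ x = y ∨ r y x := by
  by_cases e : x = y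
  · exact Or.inr (Or.inl e)
  · have := hT.2 x y e
    tauto

lemma IsTournament.flip (hT : IsTournament r) : IsTournament (flip r) :=
  ⟨hT.1, fun x y h => hT.2 y x h.symm⟩

lemma IsOmegaLike.facts {lt : ℕ → ℕ → Prop} (h : IsOmegaLike lt) :
    (∀ i, ¬ lt i i) ∧ ∀ i j, lt i j ∨ i = j ∨ lt j i := by
  rcases h with rfl | rfl <;> simp only [omegaLT, omegaStarLT] <;>
    exact ⟨fun i => by omega, fun i j => by omega⟩

/-- An edge-preserving map from a total relation into a tournament is an embedding. -/
lemma embeds_of (hT : IsTournament r) (S : Tour) (f : S.V → V)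
    (h1 : ∀ x y, S.rel x y → r (f x) (f y))
    (h2 : ∀ x y, S.rel x y ∨ x = y ∨ S.rel y x) : S.EmbedsIn r := by
  refine ⟨f, fun x y e => ?_, fun x y => ⟨h1 x y, fun h => ?_⟩⟩
  · rcases h2 x y with h | h | h
    · have := h1 _ _ h; rw [e] at this; exact absurd this (hT.irr _)
    · exact h
    · have := h1 _ _ h; rw [e] at this; exact absurd this (hT.irr _)
  · rcases h2 x y with h' | h' | h'
    · exact h'
    · subst h'; exact absurd h (hT.irr _)
    · exact absurd (h1 _ _ h') (hT.asymm h)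

lemma obs_T (hT : IsTournament r) {lt : ℕ → ℕ → Prop} (hl : IsOmegaLike lt) (s t : ℕ → V)
    (hs : ∀ i j, lt i j → r (s i) (s j)) (hd : ∀ i, r (s i) (t i))
    (ht : ∀ i j, lt i j → r (t i) (t j))
    (h1 : ∀ i j, lt i j → r (t j) (s i)) (h2 : ∀ i j, lt i j → r (s j) (t i)) : Obs r := by
  refine ⟨tTour ℕ lt, by rcases hl with rfl | rfl <;> simp [frakB], ?_⟩
  refine embeds_of hT _ (fun p : ℕ × Fin 2 => if p.2 = 0 then s p.1 else t p.1) ?_ ?_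
  · rintro ⟨i, a⟩ ⟨j, b⟩ h
    fin_cases a <;> fin_cases b <;> simp [tTour, tRel] at h ⊢ <;> grind
  · rintro ⟨i, a⟩ ⟨j, b⟩
    have := hl.facts.2 i j
    fin_cases a <;> fin_cases b <;> simp [tTour, tRel] <;> tauto

lemma obs_U (hT : IsTournament r) {lt : ℕ → ℕ → Prop} (hl : IsOmegaLike lt) (s t : ℕ → V)
    (hs : ∀ i j, lt i j → r (s i) (s j)) (hd : ∀ i, r (s i) (t i))
    (ht : ∀ i j, lt i j → r (t j) (t i))
    (h1 : ∀ i j, lt i j → r (s i) (t j)) (h2 : ∀ i j, lt i j → r (t i) (s j)) : Obs r := by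
  refine ⟨uTour ℕ lt, by rcases hl with rfl | rfl <;> simp [frakB], ?_⟩
  refine embeds_of hT _ (fun p : ℕ × Fin 2 => if p.2 = 0 then s p.1 else t p.1) ?_ ?_
  · rintro ⟨i, a⟩ ⟨j, b⟩ h
    fin_cases a <;> fin_cases b <;> simp [uTour, uRel] at h ⊢ <;> grind
  · rintro ⟨i, a⟩ ⟨j, b⟩
    have := hl.facts.2 i j
    fin_cases a <;> fin_cases b <;> simp [uTour, uRel] <;> tauto

lemma obs_H (hT : IsTournament r) {lt : ℕ → ℕ → Prop} (hl : IsOmegaLike lt) (s t : ℕ → V)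
    (hs : ∀ i j, lt i j → r (s i) (s j)) (hd : ∀ i, r (s i) (t i))
    (ht : ∀ i j, lt i j → r (t i) (t j))
    (h1 : ∀ i j, lt i j → r (t j) (s i)) (h2 : ∀ i j, lt i j → r (t i) (s j)) : Obs r := by
  refine ⟨hTour ℕ lt, by rcases hl with rfl | rfl <;> simp [frakB], ?_⟩
  refine embeds_of hT _ (fun p : ℕ × Fin 2 => if p.2 = 0 then s p.1 else t p.1) ?_ ?_
  · rintro ⟨i, a⟩ ⟨j, b⟩ h
    fin_cases a <;> fin_cases b <;> simp [hTour, hRel] at h ⊢ <;> grind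
  · rintro ⟨i, a⟩ ⟨j, b⟩
    have := hl.facts.2 i j
    fin_cases a <;> fin_cases b <;> simp [hTour, hRel] <;> tauto

lemma obs_K (hT : IsTournament r) {lt : ℕ → ℕ → Prop} (hl : IsOmegaLike lt) (s t : ℕ → V)
    (hs : ∀ i j, lt i j → r (s i) (s j)) (hd : ∀ i, r (s i) (t i))
    (ht : ∀ i j, lt i j → r (t j) (t i))
    (h1 : ∀ i j, lt i j → r (t j) (s i)) (h2 : ∀ i j, lt i j → r (t i) (s j)) : Obs r := by
  refine ⟨kTour ℕ lt, by rcases hl with rfl | rfl <;> simp [frakB], ?_⟩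
  refine embeds_of hT _ (fun p : ℕ × Fin 2 => if p.2 = 0 then s p.1 else t p.1) ?_ ?_
  · rintro ⟨i, a⟩ ⟨j, b⟩ h
    fin_cases a <;> fin_cases b <;> simp [kTour, kRel] at h ⊢ <;> grind
  · rintro ⟨i, a⟩ ⟨j, b⟩
    have := hl.facts.2 i j
    fin_cases a <;> fin_cases b <;> simp [kTour, kRel] <;> tauto

lemma obs_V (hT : IsTournament r) {lt : ℕ → ℕ → Prop} (hl : IsOmegaLike lt) (s t : ℕ → V) (v : V)
    (hs : ∀ i j, lt i j → r (s i) (s j)) (hd : ∀ i, r (s i) (t i))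
    (ht : ∀ i j, lt i j → r (t i) (t j))
    (h1 : ∀ i j, lt i j → r (s i) (t j)) (h2 : ∀ i j, lt i j → r (t i) (s j))
    (hv : ∀ i, r v (s i)) (hv' : ∀ i, r (t i) v) : Obs r := by
  refine ⟨vTour ℕ lt, by rcases hl with rfl | rfl <;> simp [frakB], ?_⟩
  refine embeds_of hT _ (fun p : Option (ℕ × Fin 2) =>
    p.elim v (fun p => if p.2 = 0 then s p.1 else t p.1)) ?_ ?_
  · rintro (_ | ⟨i, a⟩) (_ | ⟨j, b⟩) h
    · simp [vTour, vRel] at h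
    · fin_cases b <;> simp [vTour, vRel] at h ⊢ <;> grind
    · fin_cases a <;> simp [vTour, vRel] at h ⊢ <;> grind
    · fin_cases a <;> fin_cases b <;> simp [vTour, vRel] at h ⊢ <;> grind
  · rintro (_ | ⟨i, a⟩) (_ | ⟨j, b⟩)
    · exact Or.inr (Or.inl rfl)
    · fin_cases b <;> simp [vTour, vRel]
    · fin_cases a <;> simp [vTour, vRel]
    · have := hl.facts.2 i j
      fin_cases a <;> fin_cases b <;> simp [vTour, vRel] <;> tauto

lemma obs_C3 (hT : IsTournament r) {lt : ℕ → ℕ → Prop} (hl : IsOmegaLike lt)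
    (f : Fin 3 → ℕ → V)
    (h : ∀ p q i j, lt i j → r (f p i) (f q j))
    (h01 : ∀ i, r (f 0 i) (f 1 i)) (h12 : ∀ i, r (f 1 i) (f 2 i))
    (h20 : ∀ i, r (f 2 i) (f 0 i)) : Obs r := by
  refine ⟨c3Tour ℕ lt, by rcases hl with rfl | rfl <;> simp [frakB], ?_⟩
  refine embeds_of hT _ (fun p : ℕ × Fin 3 => f p.2 p.1) ?_ ?_
  · rintro ⟨i, a⟩ ⟨j, b⟩ h
    simp only [c3Tour, c3Rel] at h ⊢
    rcases h with h | ⟨rfl, ⟨rfl, rfl⟩ | ⟨rfl, rfl⟩ | ⟨rfl, rfl⟩⟩ <;> grind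
  · rintro ⟨i, a⟩ ⟨j, b⟩
    have := hl.facts.2 i j
    fin_cases a <;> fin_cases b <;> simp [c3Tour, c3Rel] <;> tauto

lemma IsOmegaLike.flip {lt : ℕ → ℕ → Prop} (h : IsOmegaLike lt) :
    IsOmegaLike (fun i j => lt j i) := by
  rcases h with rfl | rfl
  · exact Or.inr rfl
  · exact Or.inl rfl

/-- Reversing all edges preserves the property of containing a member of `𝔅`: reversal exchanges
the chains `ω` and `ω*` in `C3`, `V`, `T`, `U`, `H`, and fixes `K[C]`. -/
lemma obs_flip (hT : IsTournament r) (h : Obs (flip r)) : Obs r := by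
  have hom : IsOmegaLike omegaLT := Or.inl rfl
  have hst : IsOmegaLike omegaStarLT := Or.inr rfl
  have kC : ∀ lt, IsOmegaLike lt → (c3Tour ℕ lt).EmbedsIn (flip r) → Obs r := by
    rintro lt hl ⟨f, -, hf⟩
    refine obs_C3 hT hl.flip (fun p i => f (i, -p)) ?_ ?_ ?_ ?_
    · intro p q i j h
      exact (hf (j, -q) (i, -p)).1 (Or.inl h)
    all_goals
      intro i
      refine (hf _ _).1 (Or.inr ⟨rfl, ?_⟩)
      simp only
      decide
  have kV : ∀ lt, IsOmegaLike lt → (vTour ℕ lt).EmbedsIn (flip r) → Obs r := by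
    rintro lt hl ⟨f, -, hf⟩
    refine obs_V hT hl.flip (fun i => f (some (i, 1))) (fun i => f (some (i, 0))) (f none)
      ?_ ?_ ?_ ?_ ?_ ?_ ?_
    all_goals
      intros
      refine (hf _ _).1 ?_
      clear hf
      simp_all [vTour, vRel]
  have kT : ∀ lt, IsOmegaLike lt → (tTour ℕ lt).EmbedsIn (flip r) → Obs r := by
    rintro lt hl ⟨f, -, hf⟩
    refine obs_T hT hl.flip (fun i => f (i, 1)) (fun i => f (i, 0)) ?_ ?_ ?_ ?_ ?_
    all_goals
      intros
      refine (hf _ _).1 ?_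
      clear hf
      simp_all [tTour, tRel]
  have kH : ∀ lt, IsOmegaLike lt → (hTour ℕ lt).EmbedsIn (flip r) → Obs r := by
    rintro lt hl ⟨f, -, hf⟩
    refine obs_H hT hl.flip (fun i => f (i, 1)) (fun i => f (i, 0)) ?_ ?_ ?_ ?_ ?_
    all_goals
      intros
      refine (hf _ _).1 ?_
      clear hf
      simp_all [hTour, hRel]
  have kK : ∀ lt, IsOmegaLike lt → (kTour ℕ lt).EmbedsIn (flip r) → Obs r := by
    rintro lt hl ⟨f, -, hf⟩
    refine obs_K hT hl (fun i => f (i, 1)) (fun i => f (i, 0)) ?_ ?_ ?_ ?_ ?_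
    all_goals
      intros
      refine (hf _ _).1 ?_
      clear hf
      simp_all [kTour, kRel]
  -- Reversal spoils the edges `(x,0) → (x,1)` of `U`; shifting one of the sequences restores them.
  have kU : (uTour ℕ omegaLT).EmbedsIn (flip r) → Obs r := by
    rintro ⟨f, -, hf⟩
    refine obs_U hT hst (fun i => f (i + 1, 0)) (fun i => f (i, 1)) ?_ ?_ ?_ ?_ ?_
    all_goals
      intros
      refine (hf _ _).1 ?_
      clear hf
      simp_all [uTour, uRel, omegaLT, omegaStarLT]
      try omega
  have kU' : (uTour ℕ omegaStarLT).EmbedsIn (flip r) → Obs r := by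
    rintro ⟨f, -, hf⟩
    refine obs_U hT hom (fun i => f (i, 0)) (fun i => f (i + 1, 1)) ?_ ?_ ?_ ?_ ?_
    all_goals
      intros
      refine (hf _ _).1 ?_
      clear hf
      simp_all [uTour, uRel, omegaLT, omegaStarLT]
      try omega
  obtain ⟨S, hS, he⟩ := h
  simp only [frakB, List.mem_cons, List.not_mem_nil, or_false] at hS
  rcases hS with rfl | rfl | rfl | rfl | rfl | rfl | rfl | rfl | rfl | rfl | rfl | rfl
  exacts [kC _ hom he, kV _ hom he, kT _ hom he, kU he, kH _ hom he, kK _ hom he,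
    kC _ hst he, kV _ hst he, kT _ hst he, kU' he, kH _ hst he, kK _ hst he]

/-! ### Pairs of sequences -/

/-- The sequence `s` is a chain of type `ω`. -/
def Inc (r : V → V → Prop) (s : ℕ → V) : Prop := ∀ i j, i < j → r (s i) (s j)

/-- The sequence `s` is a chain of type `ω*`. -/
def Dec (r : V → V → Prop) (s : ℕ → V) : Prop := ∀ i j, i < j → r (s j) (s i)

/-- If every term of each sequence dominates the earlier terms of the other, a copy of `T[ω]` or
`U[ω*]` appears. -/
lemma obs_big (hT : IsTournament r) {s t : ℕ → V} (hs : Inc r s) (ht : Inc r t ∨ Dec r t)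
    (h1 : ∀ i j, i < j → r (t j) (s i)) (h2 : ∀ i j, i < j → r (s j) (t i))
    (hd : (∀ i, r (s i) (t i)) ∨ ∀ i, r (t i) (s i)) : Obs r := by
  rcases ht with ht | ht
  · rcases hd with hd | hd
    · exact obs_T hT (Or.inl rfl) s t hs hd ht h1 h2
    · exact obs_T hT (Or.inl rfl) t s ht hd hs h2 h1
  · rcases hd with hd | hd
    · refine obs_U hT (Or.inr rfl) (fun i => t (i + 1)) s ?_ ?_ ?_ ?_ ?_
      · exact fun i j h => ht _ _ (Nat.succ_lt_succ h)
      · exact fun i => h1 _ _ (Nat.lt_succ_self i)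
      · exact fun i j h => hs _ _ h
      · exact fun i j h => h1 _ _ (Nat.lt_succ_of_lt h)
      · intro i j h
        rcases Nat.lt_or_eq_of_le (Nat.succ_le_of_lt h) with h' | h'
        · exact h2 _ _ h'
        · simp only [← h']; exact hd _
    · exact obs_U hT (Or.inr rfl) t s (fun i j h => ht _ _ h) hd (fun i j h => hs _ _ h)
        (fun i j h => h1 _ _ h) (fun i j h => h2 _ _ h)

/-- If every term of each sequence dominates the later terms of the other, and `t` decreases, a copy
of `U[ω]` appears. -/
lemma obs_small (hT : IsTournament r) {s t : ℕ → V} (hs : Inc r s) (ht : Dec r t)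
    (h1 : ∀ i j, i < j → r (s i) (t j)) (h2 : ∀ i j, i < j → r (t i) (s j))
    (hd : (∀ i, r (s i) (t i)) ∨ ∀ i, r (t i) (s i)) : Obs r := by
  rcases hd with hd | hd
  · exact obs_U hT (Or.inl rfl) s t hs hd ht h1 h2
  · refine obs_U hT (Or.inl rfl) s (fun i => t (i + 1)) hs ?_ ?_ ?_ ?_
    · exact fun i => h1 _ _ (Nat.lt_succ_self i)
    · exact fun i j h => ht _ _ (Nat.succ_lt_succ h)
    · exact fun i j h => h1 _ _ (Nat.lt_succ_of_lt h)
    · intro i j h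
      rcases Nat.lt_or_eq_of_le (Nat.succ_le_of_lt h) with h' | h'
      · exact h2 _ _ h'
      · simp only [← h']; exact hd _

/-- If all edges between different indices go from `s` to `t` but `t i → s i`, a copy of `H[ω]` or
`K[ω*]` appears. -/
lemma obs_st (hT : IsTournament r) {s t : ℕ → V} (hs : Inc r s) (ht : Inc r t ∨ Dec r t)
    (h1 : ∀ i j, i < j → r (s i) (t j)) (h2 : ∀ i j, i < j → r (s j) (t i))
    (hd : ∀ i, r (t i) (s i)) : Obs r := by
  rcases ht with ht | ht
  · exact obs_H hT (Or.inl rfl) t s ht hd hs h2 h1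
  · exact obs_K hT (Or.inr rfl) t s (fun i j h => ht _ _ h) hd (fun i j h => hs _ _ h)
      (fun i j h => h1 _ _ h) (fun i j h => h2 _ _ h)

/-- If all edges between different indices go from `t` to `s` but `s i → t i`, a copy of `H[ω]` or
`K[ω]` appears. -/
lemma obs_ts (hT : IsTournament r) {s t : ℕ → V} (hs : Inc r s) (ht : Inc r t ∨ Dec r t)
    (h1 : ∀ i j, i < j → r (t j) (s i)) (h2 : ∀ i j, i < j → r (t i) (s j))
    (hd : ∀ i, r (s i) (t i)) : Obs r := by
  rcases ht with ht | ht
  · exact obs_H hT (Or.inl rfl) s t hs hd ht h1 h2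
  · exact obs_K hT (Or.inl rfl) s t hs hd ht h1 h2

/-- The two sequences interleave into a single chain `x 0 → y 0 → x 1 → y 1 → ⋯`. -/
structure Ch (r : V → V → Prop) (x y : ℕ → V) : Prop where
  incl : Inc r x
  incr : Inc r y
  xy : ∀ i j, i ≤ j → r (x i) (y j)
  yx : ∀ i j, i < j → r (y i) (x j)

/-- A vertex separating the two halves of the tail of an interleaved chain yields `V[ω]`. -/
lemma Ch.obs_V (hT : IsTournament r) {x y : ℕ → V} (h : Ch r x y) (v : V)
    (hv : (∀ i, 0 < i → r v (x i) ∧ r (y i) v) ∨ (∀ i, 0 < i → r (x i) v ∧ r v (y i))) :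
    Obs r := by
  rcases hv with hv | hv
  · exact _root_.obs_V hT (Or.inl rfl) (fun i => x (i + 1)) (fun i => y (i + 1)) v
      (fun i j l => h.incl _ _ (Nat.succ_lt_succ l)) (fun i => h.xy _ _ le_rfl)
      (fun i j l => h.incr _ _ (Nat.succ_lt_succ l))
      (fun i j l => h.xy _ _ (Nat.succ_le_succ (le_of_lt l)))
      (fun i j l => h.yx _ _ (Nat.succ_lt_succ l))
      (fun i => (hv _ (Nat.succ_pos i)).1) (fun i => (hv _ (Nat.succ_pos i)).2)
  · refine _root_.obs_V hT (Or.inl rfl) (fun i => y (i + 1)) (fun i => x (i + 2)) v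
      (fun i j l => h.incr _ _ (Nat.succ_lt_succ l)) (fun i => h.yx _ _ (Nat.lt_succ_self _))
      (fun i j l => h.incl _ _ (Nat.add_lt_add_right l 2))
      (fun i j l => h.yx _ _ ?_)
      (fun i j l => h.xy _ _ ?_)
      (fun i => (hv _ (Nat.succ_pos i)).2) (fun i => (hv _ (Nat.succ_pos _)).1)
    · have : i < j := l
      omega
    · have : i < j := l
      omega

/-- The relation between `s i` and `t j`, equality included, is the same for all `i < j`. -/
def Tri (r : V → V → Prop) (s t : ℕ → V) : Prop :=
  (∀ i j, i < j → r (s i) (t j)) ∨ (∀ i j, i < j → r (t j) (s i)) ∨ (∀ i j, i < j → s i = t j)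

lemma Tri.left (hT : IsTournament r) {s t : ℕ → V} (h : Tri r s t) (hs : Inc r s ∨ Dec r s) :
    (∀ i j, i < j → r (s i) (t j)) ∨ (∀ i j, i < j → r (t j) (s i)) := by
  rcases h with h | h | h
  · exact Or.inl h
  · exact Or.inr h
  · have e : s 0 = s 1 := (h 0 2 (by norm_num)).trans (h 1 2 (by norm_num)).symm
    rcases hs with hs | hs <;> have := hs 0 1 (by norm_num) <;> rw [e] at this <;>
      exact absurd this (hT.irr _)

lemma Tri.right (hT : IsTournament r) {s t : ℕ → V} (h : Tri r s t) (ht : Inc r t ∨ Dec r t) :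
    (∀ i j, i < j → r (s i) (t j)) ∨ (∀ i j, i < j → r (t j) (s i)) := by
  rcases h with h | h | h
  · exact Or.inl h
  · exact Or.inr h
  · have e : t 1 = t 2 := (h 0 1 (by norm_num)).symm.trans (h 0 2 (by norm_num))
    rcases ht with ht | ht <;> have := ht 1 2 (by norm_num) <;> rw [e] at this <;>
      exact absurd this (hT.irr _)

/-- A homogeneous sequence is increasing, decreasing or constant. -/
lemma Tri.self {s : ℕ → V} (h : Tri r s s) : (Inc r s ∨ Dec r s) ∨ ∀ i, s i = s 0 := by
  rcases h with h | h | h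
  · exact Or.inl (Or.inl h)
  · exact Or.inl (Or.inr h)
  · refine Or.inr fun i => ?_
    rcases Nat.eq_zero_or_pos i with rfl | hi
    · rfl
    · exact (h 0 i hi).symm

/-! ### Witness sequences over an interleaved chain -/

/-- 3-cycles `x i → y i → z i → x i` over an interleaved chain produce a member of `𝔅`. -/
lemma cycle_over_chain (hT : IsTournament r) {x y z : ℕ → V} (hc : Ch r x y)
    (hyz : ∀ i, r (y i) (z i)) (hzx : ∀ i, r (z i) (x i))
    (tzz : Tri r z z) (tzx : Tri r z x) (tzy : Tri r z y) (txz : Tri r x z) (tyz : Tri r y z) :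
    Obs r := by
  rcases tzz.self with hz | hz
  swap
  · exact hc.obs_V hT (z 0) (Or.inl fun i _ => ⟨by rw [← hz i]; exact hzx i,
      by rw [← hz i]; exact hyz i⟩)
  rcases tzx.right hT (Or.inl hc.incl) with A | A <;>
    rcases tzy.right hT (Or.inl hc.incr) with B | B
  · rcases txz.left hT (Or.inl hc.incl) with C | C <;>
      rcases tyz.left hT (Or.inl hc.incr) with D | D
    · rcases hz with hz | hz
      · refine obs_C3 hT (Or.inl rfl) ![x, y, z] ?_ (fun i => hc.xy i i le_rfl) hyz hzx
        intro p q i j h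
        fin_cases p <;> fin_cases q
        exacts [hc.incl _ _ h, hc.xy _ _ (le_of_lt h), C _ _ h, hc.yx _ _ h, hc.incr _ _ h,
          D _ _ h, A _ _ h, B _ _ h, hz _ _ h]
      · exact obs_small hT hc.incl hz C A (Or.inr hzx)
    · exact obs_ts hT hc.incr hz D B hyz
    · rcases hz with hz | hz
      · -- Here `y` and `z` interleave, and `x 0` separates them.
        have hyz' : Ch r y z := ⟨hc.incr, hz, fun i j h => by
          rcases Nat.lt_or_eq_of_le h with h | rfl
          · exact D _ _ h
          · exact hyz _, B⟩
        exact hyz'.obs_V hT (x 0) (Or.inl fun i hi => ⟨hc.xy _ _ (Nat.zero_le _), C _ _ hi⟩)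
      · exact obs_small hT hc.incr hz D B (Or.inl hyz)
    · exact obs_ts hT hc.incr hz D B hyz
  · exact hc.obs_V hT (z 0) (Or.inl fun i hi => ⟨A _ _ hi, B _ _ hi⟩)
  · exact hc.obs_V hT (z 0) (Or.inr fun i hi => ⟨A _ _ hi, B _ _ hi⟩)
  · rcases txz.left hT (Or.inl hc.incl) with C | C
    · exact obs_st hT hc.incl hz C A hzx
    · exact obs_big hT hc.incl hz C A (Or.inr hzx)

/-- A sequence with `x i → b i → y i` either produces a member of `𝔅` or interleaves with both
halves of the chain. -/
lemma between (hT : IsTournament r) {x y b : ℕ → V} (hc : Ch r x y)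
    (hxb : ∀ i, r (x i) (b i)) (hby : ∀ i, r (b i) (y i))
    (tbb : Tri r b b) (tbx : Tri r b x) (tby : Tri r b y) (txb : Tri r x b) (tyb : Tri r y b) :
    Obs r ∨ (Ch r x b ∧ Ch r b y) := by
  rcases tbb.self with hb | hb
  swap
  · exact Or.inl (hc.obs_V hT (b 0) (Or.inr fun i _ => ⟨by rw [← hb i]; exact hxb i,
      by rw [← hb i]; exact hby i⟩))
  have le_of : ∀ {s t : ℕ → V}, (∀ i j, i < j → r (s i) (t j)) → (∀ i, r (s i) (t i)) →
      ∀ i j, i ≤ j → r (s i) (t j) := by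
    intro s t h hd i j l
    rcases Nat.lt_or_eq_of_le l with l | rfl
    · exact h _ _ l
    · exact hd _
  rcases tbx.right hT (Or.inl hc.incl) with B | B <;>
    rcases tby.right hT (Or.inl hc.incr) with B' | B'
  · rcases txb.left hT (Or.inl hc.incl) with A | A
    · rcases hb with hb | hb
      · have hxb' : Ch r x b := ⟨hc.incl, hb, le_of A hxb, B⟩
        rcases tyb.left hT (Or.inl hc.incr) with D | D
        · exact Or.inr ⟨hxb', hb, hc.incr, le_of B' hby, D⟩
        · exact Or.inl (hxb'.obs_V hT (y 0) (Or.inl fun i hi => ⟨hc.yx _ _ hi, D _ _ hi⟩))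
      · exact Or.inl (obs_small hT hc.incl hb A B (Or.inl hxb))
    · exact Or.inl (obs_ts hT hc.incl hb A B hxb)
  · exact Or.inl (hc.obs_V hT (b 0) (Or.inl fun i hi => ⟨B _ _ hi, B' _ _ hi⟩))
  · exact Or.inl (hc.obs_V hT (b 0) (Or.inr fun i hi => ⟨B _ _ hi, B' _ _ hi⟩))
  · rcases tyb.left hT (Or.inl hc.incr) with D | D
    · exact Or.inl (obs_st hT hc.incr hb D B' hby)
    · exact Or.inl (obs_big hT hc.incr hb D B' (Or.inr hby))

/-- Two sequences interleaving with the same sequence `y`, and with `a i → b i`, either produce a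
member of `𝔅` or all edges between them at different indices point to the larger index. -/
lemma forward (hT : IsTournament r) {a b y : ℕ → V} (ha : Ch r a y) (hb : Ch r b y)
    (hab : ∀ i, r (a i) (b i)) (tab : Tri r a b) (tba : Tri r b a) :
    Obs r ∨ ((∀ i j, i < j → r (a i) (b j)) ∧ ∀ i j, i < j → r (b i) (a j)) := by
  rcases tba.left hT (Or.inl hb.incl) with B | B
  · rcases tab.left hT (Or.inl ha.incl) with A | A
    · exact Or.inr ⟨A, B⟩
    · exact Or.inl (obs_ts hT ha.incl (Or.inl hb.incl) A B hab)
  · exact Or.inl (ha.obs_V hT (b 0) (Or.inr fun i hi => ⟨B _ _ hi, hb.xy _ _ (Nat.zero_le _)⟩))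

/-- The four ways in which vertices `a, b, c` can witness that `x → y` are inequivalent: a 3-cycle
through `x` and `y`; a vertex `a` between `x` and `y` forming with `b` and one of `x`, `y` a 3-cycle
that the other does not complete; a 3-cycle between `x` and `y`. -/
def Wit (r : V → V → Prop) (k : Fin 4) (x y a b c : V) : Prop :=
  match k with
  | 0 => r y a ∧ r a x
  | 1 => (r x a ∧ r a y) ∧ r a b ∧ r b x
  | 2 => (r x a ∧ r a y) ∧ r y b ∧ r b a
  | 3 => (r x a ∧ r a y) ∧ (r x b ∧ r b y) ∧ (r x c ∧ r c y) ∧ r a b ∧ r b c ∧ r c a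

/-- `f 0` and `f 1` are the interleaved halves of a chain, and `f 2`, `f 3`, `f 4` witness the
inequivalence of `f 0 i` and `f 1 i`, all in the same of the four ways. -/
lemma obs_of_witnesses (hT : IsTournament r) (k : Fin 4) (f : Fin 5 → ℕ → V)
    (ht : ∀ p q, Tri r (f p) (f q)) (hc : Ch r (f 0) (f 1))
    (hw : ∀ i, Wit r k (f 0 i) (f 1 i) (f 2 i) (f 3 i) (f 4 i)) : Obs r := by
  have bet : ∀ p, (∀ i, r (f 0 i) (f p i) ∧ r (f p i) (f 1 i)) →
      Obs r ∨ (Ch r (f 0) (f p) ∧ Ch r (f p) (f 1)) := fun p h =>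
    between hT hc (fun i => (h i).1) (fun i => (h i).2) (ht _ _) (ht _ _) (ht _ _) (ht _ _) (ht _ _)
  match k, hw with
  | 0, hw =>
    exact cycle_over_chain hT hc (fun i => (hw i).1) (fun i => (hw i).2)
      (ht _ _) (ht _ _) (ht _ _) (ht _ _) (ht _ _)
  | 1, hw =>
    rcases bet 2 (fun i => (hw i).1) with h | ⟨h, -⟩
    · exact h
    · exact cycle_over_chain hT h (fun i => (hw i).2.1) (fun i => (hw i).2.2)
        (ht _ _) (ht _ _) (ht _ _) (ht _ _) (ht _ _)
  | 2, hw =>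
    rcases bet 2 (fun i => (hw i).1) with h | ⟨-, h⟩
    · exact h
    · exact cycle_over_chain hT h (fun i => (hw i).2.1) (fun i => (hw i).2.2)
        (ht _ _) (ht _ _) (ht _ _) (ht _ _) (ht _ _)
  | 3, hw =>
    rcases bet 2 (fun i => (hw i).1) with h | ⟨-, ha⟩
    · exact h
    rcases bet 3 (fun i => (hw i).2.1) with h | ⟨-, hb⟩
    · exact h
    rcases bet 4 (fun i => (hw i).2.2.1) with h | ⟨-, hc⟩
    · exact h
    have hab := fun i => (hw i).2.2.2.1
    have hbc := fun i => (hw i).2.2.2.2.1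
    have hca := fun i => (hw i).2.2.2.2.2
    rcases forward hT ha hb hab (ht _ _) (ht _ _) with h | ⟨h1, h2⟩
    · exact h
    rcases forward hT hb hc hbc (ht _ _) (ht _ _) with h | ⟨h3, h4⟩
    · exact h
    rcases forward hT hc ha hca (ht _ _) (ht _ _) with h | ⟨h5, h6⟩
    · exact h
    refine obs_C3 hT (Or.inl rfl) ![f 2, f 3, f 4] ?_ hab hbc hca
    intro p q i j h
    fin_cases p <;> fin_cases q
    exacts [ha.incl _ _ h, h1 _ _ h, h6 _ _ h, h2 _ _ h, hb.incl _ _ h, h3 _ _ h, h5 _ _ h,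
      h4 _ _ h, hc.incl _ _ h]

/-! ### Equivalence of vertices -/

/-- `x` and `y` lie in a common acyclic autonomous set. -/
def Eqv (r : V → V → Prop) (x y : V) : Prop :=
  ∃ A : Set V, Autonomous r A ∧ AcyclicSet r A ∧ x ∈ A ∧ y ∈ A

lemma Eqv.refl (hT : IsTournament r) (x : V) : Eqv r x x := by
  refine ⟨{x}, ?_, ?_, rfl, rfl⟩
  · rintro a rfl b rfl y -
    exact Iff.rfl
  · rintro ⟨a, rfl, b, rfl, c, -, h, -⟩
    exact hT.irr _ h

lemma Eqv.symm {x y : V} (h : Eqv r x y) : Eqv r y x := by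
  obtain ⟨A, h1, h2, h3, h4⟩ := h
  exact ⟨A, h1, h2, h4, h3⟩

/-- A 3-cycle has no two equivalent vertices: if two of its vertices lie in an acyclic autonomous
set, so does the third. In particular the classes are acyclic. -/
lemma Eqv.no_cycle (hT : IsTournament r) {a b c : V} (hab : Eqv r a b)
    (h1 : r a b) (h2 : r b c) (h3 : r c a) : False := by
  obtain ⟨A, A1, A2, aA, bA⟩ := hab
  by_cases hc : c ∈ A
  · exact A2 ⟨a, aA, b, bA, c, hc, h1, h2, h3⟩
  · exact hT.asymm h3 ((A1 a aA b bA c hc).2 h2)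

/-- The union of two acyclic autonomous sets with a common vertex is again one: a 3-cycle in the
union would have two vertices in one of the sets. -/
lemma Eqv.trans (hT : IsTournament r) {x y z : V} (h : Eqv r x y) (h' : Eqv r y z) :
    Eqv r x z := by
  obtain ⟨A, A1, A2, xA, yA⟩ := h
  obtain ⟨B, B1, B2, yB, zB⟩ := h'
  refine ⟨A ∪ B, ?_, ?_, Or.inl xA, Or.inr zB⟩
  · have key : ∀ a ∈ A ∪ B, ∀ w ∉ A ∪ B, (r a w ↔ r y w) := by
      rintro a (ha | ha) w hw
      · exact A1 a ha y yA w (fun h => hw (Or.inl h))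
      · exact B1 a ha y yB w (fun h => hw (Or.inr h))
    intro a ha b hb w hw
    rw [key a ha w hw, key b hb w hw]
  · rintro ⟨a, ha, b, hb, c, hc, h1, h2, h3⟩
    have kA : ∀ {p q}, p ∈ A → q ∈ A → Eqv r p q := fun hp hq => ⟨A, A1, A2, hp, hq⟩
    have kB : ∀ {p q}, p ∈ B → q ∈ B → Eqv r p q := fun hp hq => ⟨B, B1, B2, hp, hq⟩
    rcases ha with ha | ha <;> rcases hb with hb | hb <;> rcases hc with hc | hc
    · exact (kA ha hb).no_cycle hT h1 h2 h3
    · exact (kA ha hb).no_cycle hT h1 h2 h3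
    · exact (kA hc ha).no_cycle hT h3 h1 h2
    · exact (kB hb hc).no_cycle hT h2 h3 h1
    · exact (kA hb hc).no_cycle hT h2 h3 h1
    · exact (kB hc ha).no_cycle hT h3 h1 h2
    · exact (kB ha hb).no_cycle hT h1 h2 h3
    · exact (kB ha hb).no_cycle hT h1 h2 h3

lemma Eqv.of_flip (hT : IsTournament r) {x y : V} (h : Eqv (_root_.flip r) x y) : Eqv r x y := by
  obtain ⟨A, h1, h2, h3, h4⟩ := h
  refine ⟨A, ?_, ?_, h3, h4⟩
  · intro a ha b hb w hw
    have e : (r w a ↔ r w b) := h1 a ha b hb w hw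
    have na : a ≠ w := fun e => hw (e ▸ ha)
    have nb : b ≠ w := fun e => hw (e ▸ hb)
    rw [hT.2 a w na, hT.2 b w nb, e]
  · rintro ⟨a, ha, b, hb, c, hc, e1, e2, e3⟩
    exact h2 ⟨c, hc, b, hb, a, ha, e2, e1, e3⟩

/-- Inequivalent vertices `x → y` have a witness of inequivalence with at most three vertices. -/
lemma sep_witness (hT : IsTournament r) {x y : V} (hxy : r x y) (h : ¬ Eqv r x y) :
    ∃ k a b c, Wit r k x y a b c := by
  by_contra hn
  push Not at hn
  have n0 : ∀ a, r y a → ¬ r a x := fun a h1 h2 => hn 0 a x x ⟨h1, h2⟩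
  have n1 : ∀ a b, r x a → r a y → r a b → ¬ r b x :=
    fun a b h1 h2 h3 h4 => hn 1 a b x ⟨⟨h1, h2⟩, h3, h4⟩
  have n2 : ∀ a b, r x a → r a y → r y b → ¬ r b a :=
    fun a b h1 h2 h3 h4 => hn 2 a b x ⟨⟨h1, h2⟩, h3, h4⟩
  have n3 : ∀ a b c, r x a → r a y → r x b → r b y → r x c → r c y → r a b → r b c → ¬ r c a :=
    fun a b c h1 h2 h3 h4 h5 h6 h7 h8 h9 =>
      hn 3 a b c ⟨⟨h1, h2⟩, ⟨h3, h4⟩, ⟨h5, h6⟩, h7, h8, h9⟩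
  have irr := hT.irr
  have asy : ∀ a b, r a b → ¬ r b a := fun a b => hT.asymm
  have tot := hT.tot
  refine h ⟨{z | z = x ∨ z = y ∨ (r x z ∧ r z y)}, ?_, ?_, Or.inl rfl, Or.inr (Or.inl rfl)⟩
  · have key : ∀ a, (a = x ∨ a = y ∨ (r x a ∧ r a y)) →
        ∀ w, ¬ (w = x ∨ w = y ∨ (r x w ∧ r w y)) → (r a w ↔ r x w) := by
      intro a ha w hw
      have := tot a w
      have := tot x w
      have := tot y w
      rcases ha with rfl | rfl | ⟨h1, h2⟩
      · exact Iff.rfl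
      · grind
      · have := n1 a w h1 h2
        have := n2 a w h1 h2
        grind
    intro a ha b hb w hw
    rw [key a ha w hw, key b hb w hw]
  · rintro ⟨a, ha, b, hb, c, hc, h1, h2, h3⟩
    simp only [Set.mem_ofPred_eq] at ha hb hc
    have := n3 a b c
    rcases ha with rfl | rfl | ha <;> rcases hb with rfl | rfl | hb <;>
      rcases hc with rfl | rfl | hc <;> grind

/-! ### Ramsey's theorem for pairs -/

/-- Infinite Ramsey theorem for pairs and finitely many colours. -/
lemma ramsey {κ : Type*} [Finite κ] (c : ℕ → ℕ → κ) :
    ∃ (g : ℕ → ℕ) (k : κ), StrictMono g ∧ ∀ i j, i < j → c (g i) (g j) = k := by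
  classical
  let U : Ultrafilter ℕ := Filter.hyperfilter ℕ
  have col : ∀ f : ℕ → κ, ∃ k, ∀ᶠ j in U, f j = k := by
    intro f
    have h : (⋃ k ∈ (Set.univ : Set κ), {j | f j = k}) ∈ U := by
      have e : (⋃ k ∈ (Set.univ : Set κ), {j | f j = k}) = Set.univ := by ext j; simp
      rw [e]
      exact Filter.univ_mem
    obtain ⟨k, -, hk⟩ := (Ultrafilter.finite_biUnion_mem_iff Set.finite_univ).1 h
    exact ⟨k, hk⟩
  choose k hk using fun i => col (c i)
  obtain ⟨k₀, hk₀⟩ := col k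
  have big : ∀ n : ℕ, ∀ᶠ j in (U : Filter ℕ), n < j := fun n => by
    have : ∀ᶠ j in (Filter.cofinite : Filter ℕ), n < j := by
      rw [Nat.cofinite_eq_atTop]; exact Filter.eventually_gt_atTop n
    exact Filter.hyperfilter_le_cofinite this
  -- Each new term has limit colour `k₀` and gets colour `k₀` with all previous terms.
  have step : ∀ l : List ℕ, (∀ i ∈ l, k i = k₀) →
      ∃ j, k j = k₀ ∧ ∀ i ∈ l, i < j ∧ c i j = k₀ := by
    intro l hl
    have h : ∀ᶠ j in U, ∀ i ∈ l, i < j ∧ c i j = k₀ := by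
      have := (Filter.eventually_all_finite (l := (U : Filter ℕ)) (List.finite_toSet l)
        (p := fun i j => i < j ∧ c i j = k₀)).2 (fun i hi => ?_)
      · exact this
      · filter_upwards [big i, hk i] with j h1 h2
        exact ⟨h1, h2.trans (hl i hi)⟩
    obtain ⟨j, h1, h2⟩ := (hk₀.and h).exists
    exact ⟨j, h1, h2⟩
  obtain ⟨g, hg⟩ := exists_seq_of_forall_finset_exists (fun i => k i = k₀)
    (fun i j => i < j ∧ c i j = k₀) (fun s hs => by
      obtain ⟨j, h1, h2⟩ := step s.toList (fun i hi => hs i (by simpa using hi))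
      exact ⟨j, h1, fun i hi => h2 i (by simpa using hi)⟩)
  exact ⟨g, k₀, fun i j h => (hg.2 i j h).1, fun i j h => (hg.2 i j h).2⟩

/-! ### Infinitely many classes -/

/-- Inequivalent vertices forming a chain of type `ω` produce a member of `𝔅`. The witnesses are
taken for the disjoint pairs `x (2 n), x (2 n + 1)`, so that the two halves interleave. -/
lemma obs_of_inc (hT : IsTournament r) (x : ℕ → V) (hx : Inc r x)
    (hn : ∀ i j, i < j → ¬ Eqv r (x i) (x j)) : Obs r := by
  have hw : ∀ n, ∃ k a b c, Wit r k (x (2 * n)) (x (2 * n + 1)) a b c := fun n =>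
    sep_witness hT (hx _ _ (Nat.lt_succ_self _)) (hn _ _ (Nat.lt_succ_self _))
  choose k a b c hw using hw
  let f : Fin 5 → ℕ → V := ![fun n => x (2 * n), fun n => x (2 * n + 1), a, b, c]
  -- The colour records the kind of witness and all edges between the two tuples of vertices.
  obtain ⟨g, ⟨k₀, d⟩, hg, hcol⟩ := ramsey (κ := Fin 4 × (Fin 5 × Fin 5 → Prop × Prop))
    (fun i j => (k i, fun pq => (r (f pq.1 i) (f pq.2 j), r (f pq.2 j) (f pq.1 i))))
  refine obs_of_witnesses hT k₀ (fun p i => f p (g i)) ?_ ?_ ?_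
  · intro p q
    have h : ∀ i j, i < j → (r (f p (g i)) (f q (g j)) ↔ (d (p, q)).1) ∧
        (r (f q (g j)) (f p (g i)) ↔ (d (p, q)).2) := by
      intro i j l
      have := congrFun (Prod.ext_iff.1 (hcol i j l)).2 (p, q)
      rw [Prod.ext_iff] at this
      exact ⟨iff_of_eq this.1, iff_of_eq this.2⟩
    by_cases d1 : (d (p, q)).1
    · exact Or.inl fun i j l => (h i j l).1.2 d1
    by_cases d2 : (d (p, q)).2
    · exact Or.inr (Or.inl fun i j l => (h i j l).2.2 d2)
    · refine Or.inr (Or.inr fun i j l => ?_)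
      have := hT.tot (f p (g i)) (f q (g j))
      have := h i j l
      tauto
  · refine ⟨fun i j l => hx _ _ ?_, fun i j l => hx _ _ ?_, fun i j l => hx _ _ ?_,
      fun i j l => hx _ _ ?_⟩
    · have := hg l; omega
    · have := hg l; omega
    · have := hg.monotone l; omega
    · have := hg l; omega
  · intro i
    have : k (g i) = k₀ := (Prod.ext_iff.1 (hcol i (i + 1) (Nat.lt_succ_self i))).1
    rw [← this]
    exact hw (g i)

/-- A descending chain is an ascending one for the reversed tournament. -/
lemma obs_of_seq (hT : IsTournament r) (x : ℕ → V)
    (hn : ∀ i j, i ≠ j → ¬ Eqv r (x i) (x j)) : Obs r := by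
  obtain ⟨g, d, hg, hcol⟩ := ramsey (κ := Prop) (fun i j => r (x i) (x j))
  have hne : ∀ i j, i < j → ¬ Eqv r (x (g i)) (x (g j)) := fun i j l => hn _ _ (hg l).ne
  by_cases hd : d
  · refine obs_of_inc hT (fun i => x (g i)) (fun i j l => ?_) hne
    exact (iff_of_eq (hcol i j l)).2 hd
  · refine obs_flip hT (obs_of_inc hT.flip (fun i => x (g i)) (fun i j l => ?_)
      (fun i j l h => hne i j l (h.of_flip hT)))
    have h1 : ¬ r (x (g i)) (x (g j)) := fun h => hd ((iff_of_eq (hcol i j l)).1 h)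
    rcases hT.tot (x (g i)) (x (g j)) with h | h | h
    · exact absurd h h1
    · exact absurd (h ▸ Eqv.refl hT _) (hne i j l)
    · exact h

/-! ### Finitely many classes -/

/-- Equivalence of vertices as a setoid. -/
def eqvSetoid (hT : IsTournament r) : Setoid V :=
  ⟨Eqv r, Eqv.refl hT, Eqv.symm, Eqv.trans hT⟩

/-- Vertices outside a common class see equivalent vertices in the same way. -/
lemma Eqv.edge {x x' y : V} (h : Eqv r x x') (hy : ¬ Eqv r x y) :
    r x y ↔ r x' y := by
  obtain ⟨A, h1, h2, h3, h4⟩ := h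
  exact h1 x h3 x' h4 y (fun h5 => hy ⟨A, h1, h2, h3, h5⟩)

lemma Eqv.edge₂ (hT : IsTournament r) {x x' y y' : V} (h : Eqv r x x') (h' : Eqv r y y')
    (hy : ¬ Eqv r x y) : r x y ↔ r x' y' := by
  have e1 := h.edge hy
  have n1 : ¬ Eqv r x' y := fun h2 => hy (h.trans hT h2)
  have n2 : ¬ Eqv r y x' := fun h2 => n1 h2.symm
  have e2 := h'.edge n2
  have n3 : x' ≠ y := fun e => n1 (e ▸ Eqv.refl hT _)
  have n4 : x' ≠ y' := fun e => n1 (e ▸ h'.symm)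
  rw [e1, hT.2 x' y n3, hT.2 x' y' n4, e2]

lemma finite_lexsum (hT : IsTournament r) (hf : Finite (Quotient (eqvSetoid hT))) :
    IsFiniteLexSumOfAcyclic r := by
  obtain ⟨n, ⟨ψ⟩⟩ := Finite.exists_equiv_fin (Quotient (eqvSetoid hT))
  let φ : V → Fin n := fun x => ψ (Quotient.mk (eqvSetoid hT) x)
  have hφ : ∀ x y, φ x = φ y ↔ Eqv r x y := fun x y => by
    simp only [φ, ψ.apply_eq_iff_eq]
    exact Quotient.eq (r := eqvSetoid hT)
  have hsurj : ∀ i, ∃ x, φ x = i := fun i => by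
    obtain ⟨x, hx⟩ := Quotient.exists_rep (ψ.symm i)
    exact ⟨x, by simp [φ, hx]⟩
  choose rep hrep using hsurj
  refine ⟨Fin n, fun i j => r (rep i) (rep j), fun i => {x // φ x = i},
    fun i x y => r x.1 y.1, inferInstance, ?_, ?_, (Equiv.sigmaFiberEquiv φ).symm, ?_⟩
  · refine ⟨fun i => hT.irr _, fun i j h => hT.2 _ _ fun e => h ?_⟩
    rw [← hrep i, ← hrep j, e]
  · refine fun i => ⟨⟨fun x => hT.irr _, fun x y h => hT.2 _ _ fun e => h (Subtype.ext e)⟩, ?_⟩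
    rintro ⟨a, -, b, -, c, -, h1, h2, h3⟩
    exact Eqv.no_cycle hT ((hφ a.1 b.1).1 (a.2.trans b.2.symm)) h1 h2 h3
  · intro x y
    have hcast : ∀ {i j : Fin n} (h : i = j) (z : {x // φ x = i}),
        (cast (congrArg (fun i => {x // φ x = i}) h) z).1 = z.1 := by
      rintro i _ rfl z
      rfl
    have hrx : Eqv r x (rep (φ x)) := (hφ _ _).1 (hrep _).symm
    have hry : Eqv r y (rep (φ y)) := (hφ _ _).1 (hrep _).symm
    change r x y ↔ (φ x ≠ φ y ∧ r (rep (φ x)) (rep (φ y))) ∨ ∃ h : φ x = φ y,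
      r (cast (congrArg (fun i => {x // φ x = i}) h) (⟨x, rfl⟩ : {z // φ z = φ x})).1 y
    by_cases h : φ x = φ y
    · simp only [hcast, ne_eq, h, not_true_eq_false, false_and, exists_true_left, false_or]
    · have := hrx.edge₂ hT hry (fun e => h ((hφ _ _).2 e))
      simp [h, this]

end

/-- Every infinite tournament either is a lexicographical sum of acyclic
tournaments indexed by a finite tournament, or contains a subtournament isomorphic to a
member of `𝔅`. -/
theorem lexsum_or_obstruction {V : Type u} (r : V → V → Prop) (hT : IsTournament r)
    (hInf : Infinite V) :
    IsFiniteLexSumOfAcyclic r ∨ ∃ S ∈ frakB, S.EmbedsIn r := by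
  rcases finite_or_infinite (Quotient (eqvSetoid hT)) with hf | hf
  · exact Or.inl (finite_lexsum hT hf)
  · right
    let q := Infinite.natEmbedding (Quotient (eqvSetoid hT))
    refine obs_of_seq hT (fun n => (q n).out) fun i j hij h => hij (q.injective ?_)
    rw [← Quotient.out_eq (q i), ← Quotient.out_eq (q j)]
    exact Quotient.sound h
end
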